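/- Let X ∈ Sⁿ with distinct eigenvalues μ₁ > … > μ_r and index blocks α₁,…,α_r, fix m ∈ {1,…,r}, and let i = min α_m (so that either i = 1 or λ_{i−1}(X) > λᵢ(X)). Consider the i-th largest eigenvalue function λᵢ : Sⁿ → ℝ. Then: (a) for every H ∈ Sⁿ and every U ∈ Oⁿ(X), dλᵢ(X)(H) = λ₁(U_{α_m}ᵀ·H·U_{α_m}), the largest eigenvalue of U_{α_m}ᵀHU_{α_m}, and this coincides with the one-sided directional derivative lim_{t↓0}[λᵢ(X+tH)−λᵢ(X)]/t; (b) λᵢ is subdifferentially regular at X; (c) ∂λᵢ(X) = { U_{α_m}·Diag(z)·U_{α_m}ᵀ : U ∈ Oⁿ(X), z ∈ ℝ^{|α_m|}, z_j ≥ 0 for all j, ∑_j z_j = 1 }. -/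

import Mathlib

open Filter Topology Matrix

noncomputable section

namespace SpecPaper

/-! ## Generic variational analysis definitions over a topological real vector space -/

variable {E : Type*}

section Generic

variable [AddCommGroup E] [Module ℝ E] [TopologicalSpace E]

/-- `f x` is finite (neither `+∞` nor `-∞`). -/
def IsFiniteAt (f : E → EReal) (x : E) : Prop :=
  f x ≠ ⊤ ∧ f x ≠ ⊥

/-- The norm induced by a given inner product. -/
noncomputable def nrm (ip : E → E → ℝ) (x : E) : ℝ :=
  Real.sqrt (ip x x)

/-- The subderivative `df(x)(w)`. -/
noncomputable def subderiv (f : E → EReal) (x w : E) : EReal :=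
  Filter.liminf (fun p : ℝ × E => (((p.1)⁻¹ : ℝ) : EReal) * (f (x + p.1 • p.2) - f x))
    ((nhdsWithin (0 : ℝ) (Set.Ioi 0)) ×ˢ nhds w)

/-- The second-order difference quotient `Δ²ₜ f(x,v)(w)`. -/
noncomputable def sdq2 (ip : E → E → ℝ) (f : E → EReal) (x v : E) (t : ℝ) (w : E) : EReal :=
  (((2 / t ^ 2) : ℝ) : EReal) * (f (x + t • w) - f x - ((t * ip v w : ℝ) : EReal))

/-- The second subderivative `d²f(x,v)(w)`. -/
noncomputable def subderiv2 (ip : E → E → ℝ) (f : E → EReal) (x v w : E) : EReal :=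
  Filter.liminf (fun p : ℝ × E => sdq2 ip f x v p.1 p.2)
    ((nhdsWithin (0 : ℝ) (Set.Ioi 0)) ×ˢ nhds w)

/-- Twice epi-differentiability of `f` at `x` for `v`. -/
def TwiceEpiDiff (ip : E → E → ℝ) (f : E → EReal) (x v : E) : Prop :=
  IsFiniteAt f x ∧
    ∀ t : ℕ → ℝ, (∀ k, 0 < t k) → Tendsto t atTop (nhds 0) →
      ∀ w : E, ∃ ws : ℕ → E, Tendsto ws atTop (nhds w) ∧
        Tendsto (fun k => sdq2 ip f x v (t k) (ws k)) atTop (nhds (subderiv2 ip f x v w))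

/-- `v` is a regular subgradient of `f` at `x`. -/
def RegSubgrad (ip : E → E → ℝ) (f : E → EReal) (x v : E) : Prop :=
  IsFiniteAt f x ∧
    (0 : EReal) ≤ Filter.liminf
      (fun y : E =>
        (((nrm ip (y - x))⁻¹ : ℝ) : EReal) * (f y - f x - ((ip v (y - x) : ℝ) : EReal)))
      (nhdsWithin x {x}ᶜ)

/-- `v` is a (limiting) subgradient of `f` at `x`. -/
def LimSubgrad (ip : E → E → ℝ) (f : E → EReal) (x v : E) : Prop :=
  ∃ xs vs : ℕ → E, (∀ k, RegSubgrad ip f (xs k) (vs k)) ∧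
    Tendsto xs atTop (nhds x) ∧ Tendsto vs atTop (nhds v) ∧
    Tendsto (fun k => f (xs k)) atTop (nhds (f x))

/-- The tangent cone to `C` at `x`. -/
def tangentCone (C : Set E) (x : E) : Set E :=
  {w | ∃ (t : ℕ → ℝ) (ws : ℕ → E), (∀ k, 0 < t k) ∧ Tendsto t atTop (nhds 0) ∧
    Tendsto ws atTop (nhds w) ∧ ∀ k, x + t k • ws k ∈ C}

/-- The regular normal cone to `C` at `x`. -/
def regNormalCone (ip : E → E → ℝ) (C : Set E) (x : E) : Set E :=
  {v | ∀ w ∈ tangentCone C x, ip v w ≤ 0}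

/-- The limiting normal cone to `C` at `x`. -/
def limNormalCone (ip : E → E → ℝ) (C : Set E) (x : E) : Set E :=
  {v | ∃ xs vs : ℕ → E, (∀ k, xs k ∈ C) ∧ (∀ k, vs k ∈ regNormalCone ip C (xs k)) ∧
    Tendsto xs atTop (nhds x) ∧ Tendsto vs atTop (nhds v)}

/-- The critical cone `C_f(x,v)`. -/
def criticalCone (ip : E → E → ℝ) (f : E → EReal) (x v : E) : Set E :=
  {w | subderiv f x w = ((ip v w : ℝ) : EReal)}

/-- `f` is locally Lipschitz continuous at `x` relative to its domain. -/
def LocLipAtRelDom (ip : E → E → ℝ) (f : E → EReal) (x : E) : Prop :=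
  IsFiniteAt f x ∧
    ∃ V ∈ nhds x, ∃ ℓ : ℝ, 0 ≤ ℓ ∧
      ∀ a ∈ V, ∀ b ∈ V, f a ≠ ⊤ → f b ≠ ⊤ →
        f a ≠ ⊥ ∧ f b ≠ ⊥ ∧ |(f a).toReal - (f b).toReal| ≤ ℓ * nrm ip (a - b)

/-- `f` is locally Lipschitz continuous relative to its domain. -/
def LocLipRelDom (ip : E → E → ℝ) (f : E → EReal) : Prop :=
  ∀ x : E, f x ≠ ⊤ → LocLipAtRelDom ip f x

/-- `v` is a proximal subgradient of `f` at `x`. -/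
def ProxSubgrad (ip : E → E → ℝ) (f : E → EReal) (x v : E) : Prop :=
  IsFiniteAt f x ∧
    ∃ r > (0 : ℝ), ∃ ε > (0 : ℝ), ∀ x' : E, nrm ip (x' - x) ≤ ε →
      f x + ((ip v (x' - x) - r / 2 * ip (x' - x) (x' - x) : ℝ) : EReal) ≤ f x'

/-- `f` is prox-regular at `x` for `v`. -/
def ProxRegularAtFor (ip : E → E → ℝ) (f : E → EReal) (x v : E) : Prop :=
  IsFiniteAt f x ∧
    (∃ δ > (0 : ℝ), LowerSemicontinuousOn f {x' | nrm ip (x' - x) < δ}) ∧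
    ∃ ε > (0 : ℝ), ∃ r : ℝ, 0 ≤ r ∧
      ∀ x₁ v₁ : E, LimSubgrad ip f x₁ v₁ → nrm ip (x₁ - x) < ε → nrm ip (v₁ - v) < ε →
        f x₁ < f x + (ε : EReal) →
        ∀ x' : E, nrm ip (x' - x) < ε →
          f x₁ + ((ip v₁ (x' - x₁) - r / 2 * ip (x' - x₁) (x' - x₁) : ℝ) : EReal) ≤ f x'

/-- `f` is prox-regular at `x` (for every subgradient). -/
def ProxRegularAt (ip : E → E → ℝ) (f : E → EReal) (x : E) : Prop :=
  ∀ v : E, LimSubgrad ip f x v → ProxRegularAtFor ip f x v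

/-- `f` is subdifferentially continuous at `x`. -/
def SubdiffContAt (ip : E → E → ℝ) (f : E → EReal) (x : E) : Prop :=
  ∀ v : E, LimSubgrad ip f x v →
    ∀ xs vs : ℕ → E, (∀ k, LimSubgrad ip f (xs k) (vs k)) →
      Tendsto xs atTop (nhds x) → Tendsto vs atTop (nhds v) →
      Tendsto (fun k => f (xs k)) atTop (nhds (f x))

/-- `f` is prox-bounded. -/
def ProxBounded (ip : E → E → ℝ) (f : E → EReal) : Prop :=
  ∃ α c : ℝ, ∀ x : E, (c : EReal) ≤ f x + ((α * ip x x : ℝ) : EReal)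

/-- The proximal mapping (as a set of minimizers). -/
def proxSet (ip : E → E → ℝ) (f : E → EReal) (γ : ℝ) (x : E) : Set E :=
  {w | ∀ w' : E,
    f w + ((1 / (2 * γ) * ip (w - x) (w - x) : ℝ) : EReal) ≤
      f w' + ((1 / (2 * γ) * ip (w' - x) (w' - x) : ℝ) : EReal)}

/-- The proximal map of `f` with parameter `γ` is single-valued around `z` and the resulting
map is directionally differentiable at `z`. -/
def ProxSingleDirDiff (ip : E → E → ℝ) (f : E → EReal) (γ : ℝ) (z : E) : Prop :=
  ∃ V ∈ nhds z, ∃ P : E → E, (∀ u ∈ V, proxSet ip f γ u = {P u}) ∧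
    ∀ h : E, ∃ L : E,
      Tendsto (fun t : ℝ => t⁻¹ • (P (z + t • h) - P z)) (nhdsWithin 0 (Set.Ioi 0)) (nhds L)

/-- The parabolic difference quotient. -/
noncomputable def parabQuot (f : E → EReal) (x w : E) (t : ℝ) (z : E) : EReal :=
  (((2 / t ^ 2) : ℝ) : EReal) *
    (f (x + t • w + (t ^ 2 / 2) • z) - f x - ((t * (subderiv f x w).toReal : ℝ) : EReal))

/-- The parabolic subderivative `d²f(x)(w | z)`. -/
noncomputable def parabSubderiv (f : E → EReal) (x w z : E) : EReal :=
  Filter.liminf (fun p : ℝ × E => parabQuot f x w p.1 p.2)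
    ((nhdsWithin (0 : ℝ) (Set.Ioi 0)) ×ˢ nhds z)

/-- `f` is parabolically epi-differentiable at `x` for `w`. -/
def ParabEpiDiff (f : E → EReal) (x w : E) : Prop :=
  (∃ z : E, parabSubderiv f x w z < ⊤) ∧
    ∀ t : ℕ → ℝ, (∀ k, 0 < t k) → Tendsto t atTop (nhds 0) →
      ∀ z : E, ∃ zs : ℕ → E, Tendsto zs atTop (nhds z) ∧
        Tendsto (fun k => parabQuot f x w (t k) (zs k)) atTop (nhds (parabSubderiv f x w z))

/-- `φ` is a generalized quadratic form: its domain is a linear subspace and on the domain it is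
given by a symmetric linear operator. -/
def IsGQF (ip : E → E → ℝ) (φ : E → EReal) : Prop :=
  (φ 0 ≠ ⊤) ∧
  (∀ x y : E, φ x ≠ ⊤ → φ y ≠ ⊤ → φ (x + y) ≠ ⊤) ∧
  (∀ (c : ℝ) (x : E), φ x ≠ ⊤ → φ (c • x) ≠ ⊤) ∧
  ∃ L : E → E,
    (∀ x y : E, φ x ≠ ⊤ → φ y ≠ ⊤ → L (x + y) = L x + L y) ∧
    (∀ (c : ℝ) (x : E), φ x ≠ ⊤ → L (c • x) = c • L x) ∧
    (∀ x y : E, φ x ≠ ⊤ → φ y ≠ ⊤ → ip (L x) y = ip x (L y)) ∧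
    (∀ x : E, φ x ≠ ⊤ → φ x = ((ip (L x) x : ℝ) : EReal))

/-- `f` is generalized twice differentiable at `x` for `v`. -/
def GenTwiceDiff (ip : E → E → ℝ) (f : E → EReal) (x v : E) : Prop :=
  TwiceEpiDiff ip f x v ∧ IsGQF ip (subderiv2 ip f x v)

/-- Proto-differentiability of a set-valued map `F` at `x` for `y ∈ F x`. -/
def ProtoDiff (F : E → Set E) (x y : E) : Prop :=
  ∀ w η : E, (w, η) ∈ tangentCone {p : E × E | p.2 ∈ F p.1} (x, y) →
    ∀ t : ℕ → ℝ, (∀ k, 0 < t k) → Tendsto t atTop (nhds 0) →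
      ∃ ws ηs : ℕ → E, Tendsto ws atTop (nhds w) ∧ Tendsto ηs atTop (nhds η) ∧
        ∀ k, y + t k • ηs k ∈ F (x + t k • ws k)

/-- Relative interior of a set (interior relative to its affine hull). -/
def relInterior (C : Set E) : Set E :=
  {y | y ∈ C ∧ ∃ V ∈ nhds y, ∀ z ∈ V, z ∈ affineSpan ℝ C → z ∈ C}

/-- A polyhedral set: the intersection of finitely many closed half-spaces. -/
def IsPolyhedral (ip : E → E → ℝ) (C : Set E) : Prop :=
  ∃ (k : ℕ) (a : Fin k → E) (b : Fin k → ℝ), C = {x | ∀ j : Fin k, ip (a j) x ≤ b j}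

/-- The subdifferential of a convex function. -/
def convexSubdiff (ip : E → E → ℝ) (f : E → EReal) (x : E) : Set E :=
  {v | ∀ z : E, f x + ((ip v (z - x) : ℝ) : EReal) ≤ f z}

/-- The natural inner product on `E × ℝ`. -/
def ipProd (ip : E → E → ℝ) : E × ℝ → E × ℝ → ℝ :=
  fun p q => ip p.1 q.1 + p.2 * q.2

/-- The epigraph of `f`. -/
def epiSet (f : E → EReal) : Set (E × ℝ) :=
  {p | f p.1 ≤ (p.2 : EReal)}

/-- `f` is subdifferentially regular at `x`. -/
def SubdiffRegularAt (ip : E → E → ℝ) (f : E → EReal) (x : E) : Prop :=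
  IsFiniteAt f x ∧
    regNormalCone (ipProd ip) (epiSet f) (x, (f x).toReal) =
      limNormalCone (ipProd ip) (epiSet f) (x, (f x).toReal)

/-! Real-valued versions: semidifferentiability, gradients. -/

/-- `f` is semidifferentiable at `x`. -/
def SemiDiffAt (f : E → ℝ) (x : E) : Prop :=
  ∀ w : E, ∃ d : ℝ,
    Tendsto (fun p : ℝ × E => (p.1)⁻¹ * (f (x + p.1 • p.2) - f x))
      ((nhdsWithin (0 : ℝ) (Set.Ioi 0)) ×ˢ nhds w) (nhds d)

/-- The (real value of the) subderivative of a real-valued function. -/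
noncomputable def dReal (f : E → ℝ) (x w : E) : ℝ :=
  (subderiv (fun y => ((f y : ℝ) : EReal)) x w).toReal

/-- The second-order difference quotient built from the subderivative. -/
noncomputable def sdq2R (f : E → ℝ) (x : E) (t : ℝ) (w : E) : ℝ :=
  (2 / t ^ 2) * (f (x + t • w) - f x - t * dReal f x w)

/-- `f` is twice semidifferentiable at `x`. -/
def TwiceSemiDiffAt (f : E → ℝ) (x : E) : Prop :=
  SemiDiffAt f x ∧
    ∀ w : E, ∃ d : ℝ,
      Tendsto (fun p : ℝ × E => sdq2R f x p.1 p.2)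
        ((nhdsWithin (0 : ℝ) (Set.Ioi 0)) ×ˢ nhds w) (nhds d)

/-- The second semiderivative `d²f(x)(w)` (the liminf; it is the full limit whenever `f` is
twice semidifferentiable at `x`). -/
noncomputable def secondSemiDeriv (f : E → ℝ) (x w : E) : EReal :=
  Filter.liminf (fun p : ℝ × E => ((sdq2R f x p.1 p.2 : ℝ) : EReal))
    ((nhdsWithin (0 : ℝ) (Set.Ioi 0)) ×ˢ nhds w)

/-- `f` is (Fréchet) differentiable at `x` with gradient `g` (w.r.t. inner product `ip`). -/
def HasGradAt (ip : E → E → ℝ) (f : E → ℝ) (x g : E) : Prop :=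
  Tendsto (fun y : E => (nrm ip (y - x))⁻¹ * (f y - f x - ip g (y - x)))
    (nhdsWithin x {x}ᶜ) (nhds 0)

/-- `f` is locally Lipschitz continuous around `x`. -/
def LocLipAt (ip : E → E → ℝ) (f : E → ℝ) (x : E) : Prop :=
  ∃ V ∈ nhds x, ∃ ℓ : ℝ, 0 ≤ ℓ ∧ ∀ a ∈ V, ∀ b ∈ V, |f a - f b| ≤ ℓ * nrm ip (a - b)

/-- `f` is twice differentiable at `x` with gradient map `G` near `x` and second derivative
(the derivative of `G` at `x`) given by the linear map `Dxx`. -/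
def HasSecondDerivAt (ip : E → E → ℝ) (f : E → EReal) (x : E) (G : E → E) (Dxx : E → E) :
    Prop :=
  ∃ V ∈ nhds x, ∃ fr : E → ℝ,
    (∀ z ∈ V, f z = ((fr z : ℝ) : EReal)) ∧
    (∀ z ∈ V, HasGradAt ip fr z (G z)) ∧
    IsLinearMap ℝ Dxx ∧
    Tendsto (fun z : E => (nrm ip (z - x))⁻¹ • (G z - G x - Dxx (z - x)))
      (nhdsWithin x {x}ᶜ) (nhds 0)

/-- `f` is twice differentiable at `x`. -/
def TwiceDiffAt (ip : E → E → ℝ) (f : E → EReal) (x : E) : Prop :=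
  ∃ G Dxx : E → E, HasSecondDerivAt ip f x G Dxx

end Generic

/-! ## Eigenvalues and spectral machinery -/

open scoped Classical in
/-- The eigenvalues of a real symmetric matrix, arranged in nonincreasing order
(junk value `0` if the matrix is not symmetric). -/
noncomputable def eigval {n : ℕ} (X : Matrix (Fin n) (Fin n) ℝ) : Fin n → ℝ :=
  if h : X.IsHermitian then
    fun i => h.eigenvalues (Tuple.sort (fun j => -h.eigenvalues j) i)
  else 0

/-- `Oⁿ(X)`: orthogonal matrices realizing the ordered spectral decomposition of `X`. -/
def eigOrth {n : ℕ} (X : Matrix (Fin n) (Fin n) ℝ) : Set (Matrix (Fin n) (Fin n) ℝ) :=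
  {U | U * Uᵀ = 1 ∧ X = U * Matrix.diagonal (eigval X) * Uᵀ}

open scoped Classical in
/-- The block `α_m` of indices `j` whose eigenvalue `λ_j(X)` equals `λ_i(X)`. -/
noncomputable def blockSet {n : ℕ} (X : Matrix (Fin n) (Fin n) ℝ) (i : Fin n) :
    Finset (Fin n) :=
  Finset.univ.filter fun j => eigval X j = eigval X i

lemma mem_blockSet_self {n : ℕ} (X : Matrix (Fin n) (Fin n) ℝ) (i : Fin n) :
    i ∈ blockSet X i := by
  simp [blockSet]

/-- The increasing enumeration of the block of `i`. -/
noncomputable def blockEmb {n : ℕ} (X : Matrix (Fin n) (Fin n) ℝ) (i : Fin n) :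
    Fin (blockSet X i).card → Fin n :=
  fun a => ((blockSet X i).orderIsoOfFin rfl a : Fin n)

/-- The position of `i` inside its own block. -/
noncomputable def blockIdx {n : ℕ} (X : Matrix (Fin n) (Fin n) ℝ) (i : Fin n) :
    Fin (blockSet X i).card :=
  ((blockSet X i).orderIsoOfFin rfl).symm ⟨i, mem_blockSet_self X i⟩

/-- The principal submatrix of `M` corresponding to the block of `i` (for `X`). -/
noncomputable def blockMat {n : ℕ} (X M : Matrix (Fin n) (Fin n) ℝ) (i : Fin n) :
    Matrix (Fin (blockSet X i).card) (Fin (blockSet X i).card) ℝ :=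
  Matrix.of fun a b => M (blockEmb X i a) (blockEmb X i b)

/-- The directional derivative `λ'(X;H)` of the ordered eigenvalue map, computed through
`U ∈ Oⁿ(X)`: blockwise ordered eigenvalues of `U_{α_m}ᵀ H U_{α_m}`. -/
noncomputable def lambdaDir {n : ℕ} (X U H : Matrix (Fin n) (Fin n) ℝ) : Fin n → ℝ :=
  fun i => eigval (blockMat X (Uᵀ * H * U) i) (blockIdx X i)

open scoped Classical in
/-- The Moore–Penrose pseudoinverse of a square real matrix, characterized by the four
Penrose equations. -/
noncomputable def pinv {n : ℕ} (A : Matrix (Fin n) (Fin n) ℝ) :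
    Matrix (Fin n) (Fin n) ℝ :=
  if h : ∃ B : Matrix (Fin n) (Fin n) ℝ,
      A * B * A = A ∧ B * A * B = B ∧ (A * B)ᵀ = A * B ∧ (B * A)ᵀ = B * A
  then h.choose else 0

/-- The curvature term `2 ∑ₘ ⟨Diag(y)_{αₘαₘ}, U_{αₘ}ᵀ H (μₘ I - X)† H U_{αₘ}⟩`, written as a
single sum over all indices. -/
noncomputable def curvTerm {n : ℕ} (X U H : Matrix (Fin n) (Fin n) ℝ) (y : Fin n → ℝ) : ℝ :=
  2 * ∑ i : Fin n, y i *
    (Uᵀ * (H * pinv (eigval X i • (1 : Matrix (Fin n) (Fin n) ℝ) - X) * H) * U) i i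

/-- Two symmetric matrices admit a simultaneous ordered spectral decomposition. -/
def simOrdSpec {k : ℕ} (A B : Matrix (Fin k) (Fin k) ℝ) : Prop :=
  ∃ P : Matrix (Fin k) (Fin k) ℝ, P * Pᵀ = 1 ∧
    A = P * Matrix.diagonal (eigval A) * Pᵀ ∧
    B = P * Matrix.diagonal (eigval B) * Pᵀ

/-- The subspace of symmetric `n × n` real matrices. -/
def symSubmodule (n : ℕ) : Submodule ℝ (Matrix (Fin n) (Fin n) ℝ) where
  carrier := {A | A.IsSymm}
  add_mem' := by
    intro a b ha hb
    simp only [Set.mem_setOf_eq, Matrix.IsSymm] at *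
    rw [Matrix.transpose_add, ha, hb]
  zero_mem' := by
    simp only [Set.mem_setOf_eq, Matrix.IsSymm, Matrix.transpose_zero]
  smul_mem' := by
    intro c a ha
    simp only [Set.mem_setOf_eq, Matrix.IsSymm] at *
    rw [Matrix.transpose_smul, ha]

/-- The space `Sⁿ` of symmetric `n × n` real matrices. -/
abbrev Sym (n : ℕ) : Type := ↥(symSubmodule n)

/-- The trace inner product `⟨A, B⟩ = tr(AB)` on `Sⁿ`. -/
noncomputable def ipM {n : ℕ} (A B : Sym n) : ℝ :=
  ((A : Matrix (Fin n) (Fin n) ℝ) * (B : Matrix (Fin n) (Fin n) ℝ)).trace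

/-- The Euclidean inner product on `ℝⁿ`. -/
def ipV {n : ℕ} (v w : Fin n → ℝ) : ℝ :=
  ∑ i, v i * w i

/-- The spectral function `g = θ ∘ λ` on `Sⁿ`. -/
noncomputable def specFn {n : ℕ} (θ : (Fin n → ℝ) → EReal) : Sym n → EReal :=
  fun A => θ (eigval (A : Matrix (Fin n) (Fin n) ℝ))

/-- A function on `ℝⁿ` is symmetric (permutation invariant). -/
def SymmetricFn {n : ℕ} {α : Type*} (θ : (Fin n → ℝ) → α) : Prop :=
  ∀ (x : Fin n → ℝ) (σ : Equiv.Perm (Fin n)), θ (fun i => x (σ i)) = θ x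

/-- The diagonal matrix `Diag(w)` as an element of `Sⁿ`. -/
noncomputable def diagSym {n : ℕ} (w : Fin n → ℝ) : Sym n :=
  ⟨Matrix.diagonal w, Matrix.isSymm_diagonal w⟩

/-- The `i`-th order statistic: `orderStat x i` is the `i`-th largest entry of `x`. -/
noncomputable def orderStat {n : ℕ} (x : Fin n → ℝ) : Fin n → ℝ :=
  fun i => x (Tuple.sort (fun j => -x j) i)

/-! The eigenvalues above `λᵢ` are separated from it by a gap that persists near
`X`. Courant–Fischer, applied to the span of the eigenvectors of `Y` above `λᵢ(Y)`
together with a unit eigenvector `u` of `λᵢ(Y)`, therefore shows that `u uᵀ` is a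
proximal subgradient of `λᵢ` at every `Y` near `X`, with a uniform constant. Hence `λᵢ`
is weakly convex near `X`, which gives regularity and turns every limiting subgradient
into a quadratic minorant. Minorants at `X` bound the difference quotients from below and
minorants at the moving point bound them from above; by compactness of the unit sphere the
directional derivative along `H` is the maximum of `uᵀ H u` over the unit eigenvectors `u`
of `X` for `λᵢ(X)`, which is `λ₁` of the block. The subgradients are the matrices `Y`
with `⟨Y, H⟩` at most this maximum for all `H`: the density matrices on the eigenspace,
diagonalized by rotating the eigenbasis inside the block. -/

section WeakConvexity

variable [AddCommGroup E] [Module ℝ E] (B : LinearMap.BilinForm ℝ E) (r : ℝ)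

/-- `f` is weakly convex on `V` with modulus `2r` in the metric of `B`: adding `r` times the
squared norm makes it convex. -/
def WeaklyConvexOn (V : Set E) (f : E → ℝ) : Prop :=
  ConvexOn ℝ V fun y => f y + r * B y y

/-- `v` is a proximal subgradient of `f` at `x` with constant `r`, the defining quadratic minorant
being valid on all of `V`. -/
def HasQuadMinorantOn (V : Set E) (f : E → ℝ) (x v : E) : Prop :=
  ∀ z ∈ V, f x + B v (z - x) - r * B (z - x) (z - x) ≤ f z

variable {B r} {V : Set E} {f : E → ℝ}

lemma bilinForm_convexCombination {a b : ℝ} (hab : a + b = 1) (y z : E) :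
    B (a • y + b • z) (a • y + b • z) = a * B y y + b * B z z - a * b * B (z - y) (z - y) := by
  obtain rfl : b = 1 - a := by linarith
  simp only [map_add, map_sub, map_smul, LinearMap.add_apply, LinearMap.sub_apply,
    LinearMap.smul_apply, smul_eq_mul]
  ring

lemma bilinForm_smul_self (t : ℝ) (y : E) : B (t • y) (t • y) = t * (t * B y y) := by
  simp only [map_smul, LinearMap.smul_apply, smul_eq_mul]

lemma bilinForm_sub_self_comm (y z : E) : B (y - z) (y - z) = B (z - y) (z - y) := by
  rw [← neg_sub z y, LinearMap.map_neg₂, map_neg, neg_neg]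

lemma bilinForm_sub_self_le (hB : ∀ y, 0 ≤ B y y) (y z : E) :
    B (y - z) (y - z) ≤ 2 * (B y y + B z z) := by
  have hadd := hB (y + z)
  simp only [map_add, map_sub, LinearMap.add_apply, LinearMap.sub_apply] at hadd ⊢
  linarith

lemma nrm_bilinForm_pos (hpos : ∀ y ≠ 0, 0 < B y y) {y : E} (hy : y ≠ 0) :
    0 < nrm (fun a b => B a b) y :=
  Real.sqrt_pos.2 (hpos y hy)

lemma nrm_bilinForm_smul {t : ℝ} (ht : 0 ≤ t) (y : E) :
    nrm (fun a b => B a b) (t • y) = t * nrm (fun a b => B a b) y := by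
  simp only [nrm]
  rw [bilinForm_smul_self, ← mul_assoc, Real.sqrt_mul (mul_self_nonneg t), Real.sqrt_mul_self ht]

lemma convex_bilinForm_closedBall (hB : ∀ y, 0 ≤ B y y) (x : E) (c : ℝ) :
    Convex ℝ {y | B (y - x) (y - x) ≤ c} := by
  intro y hy z hz a b ha hb hab
  have hcomb : a • y + b • z - x = a • (y - x) + b • (z - x) := by
    obtain rfl : b = 1 - a := by linarith
    module
  have hdiff := mul_nonneg (mul_nonneg ha hb) (hB (z - x - (y - x)))
  rw [Set.mem_ofPred_eq] at hy hz ⊢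
  rw [hcomb, bilinForm_convexCombination hab]
  calc a * B (y - x) (y - x) + b * B (z - x) (z - x)
        - a * b * B (z - x - (y - x)) (z - x - (y - x))
      ≤ a * c + b * c := by
        linarith [mul_le_mul_of_nonneg_left hy ha, mul_le_mul_of_nonneg_left hz hb]
    _ = c := by rw [← add_mul, hab, one_mul]

lemma weaklyConvexOn_of_forall_exists_quadMinorant (hV : Convex ℝ V)
    (hf : ∀ y ∈ V, ∃ v, HasQuadMinorantOn B r V f y v) : WeaklyConvexOn B r V f := by
  refine ⟨hV, fun y hy z hz a b ha hb hab => ?_⟩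
  obtain ⟨v, hv⟩ := hf _ (hV hy hz ha hb hab)
  obtain rfl : b = 1 - a := by linarith
  have hy_sub : y - (a • y + (1 - a) • z) = (1 - a) • (y - z) := by module
  have hz_sub : z - (a • y + (1 - a) • z) = -a • (y - z) := by module
  have minorant_y := mul_le_mul_of_nonneg_left (hv y hy) ha
  have minorant_z := mul_le_mul_of_nonneg_left (hv z hz) hb
  rw [hy_sub, bilinForm_smul_self, map_smul, smul_eq_mul] at minorant_y
  rw [hz_sub, bilinForm_smul_self, map_smul, smul_eq_mul] at minorant_z
  simp only [smul_eq_mul, bilinForm_convexCombination hab, bilinForm_sub_self_comm z y]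
  linear_combination minorant_y + minorant_z

lemma convex_setOf_hasQuadMinorantOn (x : E) : Convex ℝ {v | HasQuadMinorantOn B r V f x v} := by
  intro v hv w hw a b ha hb hab z hz
  obtain rfl : b = 1 - a := by linarith
  have minorant_v := mul_le_mul_of_nonneg_left (hv z hz) ha
  have minorant_w := mul_le_mul_of_nonneg_left (hw z hz) hb
  simp only [map_add, map_smul, LinearMap.add_apply, LinearMap.smul_apply, smul_eq_mul]
  linear_combination minorant_v + minorant_w

lemma HasQuadMinorantOn.le_diffQuotient {x v w : E} {t : ℝ} (hv : HasQuadMinorantOn B r V f x v)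
    (ht : 0 < t) (hmem : x + t • w ∈ V) :
    B v w - r * (t * B w w) ≤ t⁻¹ * (f (x + t • w) - f x) := by
  have hquad := hv _ hmem
  rw [add_sub_cancel_left, bilinForm_smul_self, map_smul, smul_eq_mul] at hquad
  rw [inv_mul_eq_div, le_div_iff₀ ht]
  linarith

lemma HasQuadMinorantOn.diffQuotient_le {x v w : E} {t : ℝ}
    (hv : HasQuadMinorantOn B r V f (x + t • w) v) (ht : 0 < t) (hx : x ∈ V) :
    t⁻¹ * (f (x + t • w) - f x) ≤ B v w + r * (t * B w w) := by
  have hquad := hv _ hx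
  rw [sub_add_cancel_left, ← neg_smul, bilinForm_smul_self, map_smul, smul_eq_mul] at hquad
  rw [inv_mul_eq_div, div_le_iff₀ ht]
  linarith

lemma WeaklyConvexOn.le_of_segment (hf : WeaklyConvexOn B r V f) {y z : E} (hy : y ∈ V)
    (hz : z ∈ V) {t : ℝ} (ht₀ : 0 ≤ t) (ht₁ : t ≤ 1) :
    f (y + t • (z - y)) ≤
      (1 - t) * f y + t * f z + (1 - t) * t * (r * B (z - y) (z - y)) := by
  have hseg : y + t • (z - y) = (1 - t) • y + t • z := by module
  have hconv := hf.2 hy hz (sub_nonneg.2 ht₁) ht₀ (sub_add_cancel 1 t)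
  simp only [smul_eq_mul, bilinForm_convexCombination (sub_add_cancel 1 t)] at hconv
  rw [hseg]
  linear_combination hconv

end WeakConvexity

section FirstOrder

variable {f : E → ℝ}

lemma isFiniteAt_coe (x : E) : IsFiniteAt (fun y => (f y : EReal)) x :=
  ⟨EReal.coe_ne_top _, EReal.coe_ne_bot _⟩

lemma mem_epiSet_coe {p : E × ℝ} : p ∈ epiSet (fun y => (f y : EReal)) ↔ f p.1 ≤ p.2 :=
  EReal.coe_le_coe_iff

variable [AddCommGroup E] [TopologicalSpace E]

lemma RegSubgrad.limSubgrad {ip : E → E → ℝ} {g : E → EReal} {x v : E}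
    (hv : RegSubgrad ip g x v) : LimSubgrad ip g x v :=
  ⟨fun _ => x, fun _ => v, fun _ => hv, tendsto_const_nhds, tendsto_const_nhds,
    tendsto_const_nhds⟩

variable [Module ℝ E]

lemma regNormalCone_subset_limNormalCone {ip : E → E → ℝ} {C : Set E} {x : E} (hx : x ∈ C) :
    regNormalCone ip C x ⊆ limNormalCone ip C x := fun v hv =>
  ⟨fun _ => x, fun _ => v, fun _ => hx, fun _ => hv, tendsto_const_nhds, tendsto_const_nhds⟩

lemma subderiv_coe_of_tendsto {x w : E} {d : ℝ}
    (h : Tendsto (fun p : ℝ × E => p.1⁻¹ * (f (x + p.1 • p.2) - f x)) (𝓝[>] 0 ×ˢ 𝓝 w) (𝓝 d)) :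
    subderiv (fun y => (f y : EReal)) x w = d := by
  refine Tendsto.liminf_eq (((continuous_coe_real_ereal.tendsto d).comp h).congr fun p => ?_)
  simp only [Function.comp_apply, EReal.coe_mul, EReal.coe_sub]

section Subgradients

variable {B : LinearMap.BilinForm ℝ E} {r : ℝ} {V : Set E} {x v : E}

lemma bilinForm_closedBall_mem_nhds [IsTopologicalAddGroup E]
    (hcont : Continuous fun p : E × E => B p.1 p.2) (x : E) {c : ℝ} (hc : 0 < c) :
    {y | B (y - x) (y - x) ≤ c} ∈ 𝓝 x := by
  have hdiag : Continuous fun y => B (y - x) (y - x) :=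
    hcont.comp ((continuous_sub_right x).prodMk (continuous_sub_right x))
  have hx : B (x - x) (x - x) < c := by rwa [sub_self, map_zero]
  exact ((hdiag.tendsto x).eventually_lt_const hx).mono fun _ h => h.le

lemma regSubgrad_coe_iff (hpos : ∀ y ≠ 0, 0 < B y y) :
    RegSubgrad (fun a b => B a b) (fun y => (f y : EReal)) x v ↔
      ∀ ε > 0, ∀ᶠ y in 𝓝[≠] x,
        -(ε * nrm (fun a b => B a b) (y - x)) ≤ f y - f x - B v (y - x) := by
  have hcoe (y : E) : (((nrm (fun a b => B a b) (y - x))⁻¹ : ℝ) : EReal) *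
      ((f y : EReal) - (f x : EReal) - (B v (y - x) : EReal)) =
      (((nrm (fun a b => B a b) (y - x))⁻¹ * (f y - f x - B v (y - x)) : ℝ) : EReal) := by
    simp only [EReal.coe_mul, EReal.coe_sub]
  unfold RegSubgrad
  rw [and_iff_right (isFiniteAt_coe x), Filter.le_liminf_iff]
  simp only [hcoe]
  constructor
  · intro h ε hε
    filter_upwards [h (-ε : ℝ) (mod_cast neg_lt_zero.2 hε), self_mem_nhdsWithin] with y hy hne
    have hquot := EReal.coe_lt_coe_iff.1 hy
    rw [inv_mul_eq_div, lt_div_iff₀ (nrm_bilinForm_pos hpos (sub_ne_zero.2 hne))] at hquot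
    linarith
  · intro h b hb
    obtain ⟨q, hbq, hq⟩ := EReal.lt_iff_exists_real_btwn.1 hb
    have hq_neg : q < 0 := mod_cast hq
    filter_upwards [h (-q) (neg_pos.2 hq_neg), self_mem_nhdsWithin] with y hy hne
    refine hbq.trans_le (EReal.coe_le_coe_iff.2 ?_)
    rw [inv_mul_eq_div, le_div_iff₀ (nrm_bilinForm_pos hpos (sub_ne_zero.2 hne))]
    linarith

lemma HasQuadMinorantOn.le_of_tendsto [IsTopologicalAddGroup E] [ContinuousSMul ℝ E]
    (hv : HasQuadMinorantOn B r V f x v) (hV : V ∈ 𝓝 x) {w : E} {d : ℝ}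
    (hd : Tendsto (fun t : ℝ => t⁻¹ * (f (x + t • w) - f x)) (𝓝[>] 0) (𝓝 d)) :
    B v w ≤ d := by
  have hline : Tendsto (fun t : ℝ => x + t • w) (𝓝[>] 0) (𝓝 x) := by
    have hcont : Continuous fun t : ℝ => x + t • w := by fun_prop
    simpa using (hcont.tendsto 0).mono_left nhdsWithin_le_nhds
  have hlower : Tendsto (fun t : ℝ => B v w - r * (t * B w w)) (𝓝[>] 0) (𝓝 (B v w)) := by
    have hcont : Continuous fun t : ℝ => B v w - r * (t * B w w) := by fun_prop
    simpa using (hcont.tendsto 0).mono_left nhdsWithin_le_nhds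
  refine le_of_tendsto_of_tendsto hlower hd ?_
  filter_upwards [hline hV, self_mem_nhdsWithin] with t htV ht
  exact hv.le_diffQuotient ht htV

/- Minorants at `x` bound the difference quotients from below, minorants at the moving point
`x + t • w'` bound them from above. -/
theorem tendsto_diffQuotient_of_quadMinorants [IsTopologicalAddGroup E] [ContinuousSMul ℝ E]
    {S : E → Set E} (hcont : Continuous fun p : E × E => B p.1 p.2) (hV : V ∈ 𝓝 x)
    (hne : ∀ y ∈ V, (S y).Nonempty) (hS : ∀ y ∈ V, ∀ v ∈ S y, HasQuadMinorantOn B r V f y v)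
    {w : E} {d : ℝ} (hd : ∃ v ∈ S x, B v w = d)
    (hlt : ∀ a > d, ∀ᶠ p in 𝓝 x ×ˢ 𝓝 w, ∀ v ∈ S p.1, B v p.2 < a) :
    Tendsto (fun p : ℝ × E => p.1⁻¹ * (f (x + p.1 • p.2) - f x)) (𝓝[>] 0 ×ˢ 𝓝 w) (𝓝 d) := by
  have hle : 𝓝[>] (0 : ℝ) ×ˢ 𝓝 w ≤ 𝓝 (0, w) := by
    rw [nhds_prod_eq]
    exact Filter.prod_mono_left _ nhdsWithin_le_nhds
  have hmove : Tendsto (fun p : ℝ × E => x + p.1 • p.2) (𝓝[>] 0 ×ˢ 𝓝 w) (𝓝 x) := by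
    have hmove_cont : Continuous fun p : ℝ × E => x + p.1 • p.2 := by fun_prop
    simpa using (hmove_cont.tendsto (0, w)).mono_left hle
  have hrem : Tendsto (fun p : ℝ × E => r * (p.1 * B p.2 p.2)) (𝓝[>] 0 ×ˢ 𝓝 w) (𝓝 0) := by
    have hself : Continuous fun p : ℝ × E => B p.2 p.2 :=
      hcont.comp (continuous_snd.prodMk continuous_snd)
    simpa using (((continuous_fst.mul hself).const_mul r).tendsto (0, w)).mono_left hle
  have hpos : ∀ᶠ p : ℝ × E in 𝓝[>] 0 ×ˢ 𝓝 w, 0 < p.1 :=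
    tendsto_fst.eventually self_mem_nhdsWithin
  refine tendsto_order.2 ⟨fun a ha => ?_, fun a ha => ?_⟩
  · obtain ⟨v, hv, rfl⟩ := hd
    have hBv : Tendsto (fun p : ℝ × E => B v p.2) (𝓝[>] 0 ×ˢ 𝓝 w) (𝓝 (B v w)) :=
      ((hcont.comp (Continuous.prodMk_right v)).tendsto w).comp tendsto_snd
    have hlower := hBv.sub hrem
    rw [sub_zero] at hlower
    filter_upwards [hlower.eventually_const_lt ha, hmove hV, hpos] with p hp hpV ht
    exact hp.trans_le ((hS x (mem_of_mem_nhds hV) v hv).le_diffQuotient ht hpV)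
  · obtain ⟨b, hdb, hba⟩ := exists_between ha
    filter_upwards [(hmove.prodMk tendsto_snd).eventually (hlt b hdb),
      hrem.eventually_lt_const (sub_pos.2 hba), hmove hV, hpos] with p hpS hp hpV ht
    obtain ⟨v, hv⟩ := hne _ hpV
    have hupper := (hS _ hpV v hv).diffQuotient_le ht (mem_of_mem_nhds hV)
    linarith [hpS v hv]

lemma HasQuadMinorantOn.regSubgrad [IsTopologicalAddGroup E] (hpos : ∀ y ≠ 0, 0 < B y y)
    (hcont : Continuous fun p : E × E => B p.1 p.2) (hV : V ∈ 𝓝 x)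
    (hv : HasQuadMinorantOn B r V f x v) :
    RegSubgrad (fun a b => B a b) (fun y => (f y : EReal)) x v := by
  refine (regSubgrad_coe_iff hpos).2 fun ε hε => ?_
  have hnrm : Tendsto (fun y => r * nrm (fun a b => B a b) (y - x)) (𝓝 x) (𝓝 0) := by
    have hdiag : Continuous fun y => B (y - x) (y - x) :=
      hcont.comp ((continuous_sub_right x).prodMk (continuous_sub_right x))
    simpa [nrm] using (hdiag.sqrt.const_mul r).tendsto x
  filter_upwards [nhdsWithin_le_nhds hV, nhdsWithin_le_nhds (hnrm.eventually_lt_const hε),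
    self_mem_nhdsWithin] with y hyV hsmall hne
  have hnrm_pos := nrm_bilinForm_pos hpos (sub_ne_zero.2 hne)
  have hsq : nrm (fun a b => B a b) (y - x) * nrm (fun a b => B a b) (y - x) =
      B (y - x) (y - x) := Real.mul_self_sqrt (hpos _ (sub_ne_zero.2 hne)).le
  have hquad := hv y hyV
  rw [← hsq] at hquad
  linarith [mul_le_mul_of_nonneg_right hsmall.le hnrm_pos.le]

lemma WeaklyConvexOn.mem_tangentCone_epiSet (hf : WeaklyConvexOn B r V f) (hr : 0 ≤ r)
    (hB : ∀ y, 0 ≤ B y y) {p : E × ℝ} (hpV : p.1 ∈ V) (hp : f p.1 ≤ p.2) {z : E} (hz : z ∈ V)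
    {s : ℝ} (hs : f z ≤ s) :
    (z - p.1, s - p.2 + r * B (z - p.1) (z - p.1)) ∈
      tangentCone (epiSet fun y => (f y : EReal)) p := by
  refine ⟨fun m => 1 / ((m : ℝ) + 1), fun _ => _, fun m => Nat.one_div_pos_of_nat,
    tendsto_one_div_add_atTop_nhds_zero_nat, tendsto_const_nhds, fun m => mem_epiSet_coe.2 ?_⟩
  set t : ℝ := 1 / ((m : ℝ) + 1)
  have ht₀ : 0 ≤ t := Nat.one_div_pos_of_nat.le
  have ht₁ : t ≤ 1 := (div_le_one (Nat.cast_add_one_pos m)).2 (by simp)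
  have hcurv : 0 ≤ t * t * (r * B (z - p.1) (z - p.1)) :=
    mul_nonneg (mul_self_nonneg t) (mul_nonneg hr (hB _))
  simp only [Prod.fst_add, Prod.smul_fst, Prod.snd_add, Prod.smul_snd, smul_eq_mul]
  linarith [hf.le_of_segment hpV hz ht₀ ht₁, mul_le_mul_of_nonneg_left hp (sub_nonneg.2 ht₁),
    mul_le_mul_of_nonneg_left hs ht₀]

variable [IsTopologicalAddGroup E]

/- Along the segment from `x` to `z`, weak convexity bounds the increment of `f` from above and the
regular subgradient bounds it from below. -/
lemma WeaklyConvexOn.hasQuadMinorantOn [ContinuousSMul ℝ E] (hf : WeaklyConvexOn B r V f)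
    (hr : 0 ≤ r) (hpos : ∀ y ≠ 0, 0 < B y y) (hx : x ∈ V)
    (hv : RegSubgrad (fun a b => B a b) (fun y => (f y : EReal)) x v) :
    HasQuadMinorantOn B r V f x v := by
  intro z hz
  obtain rfl | hne := eq_or_ne z x
  · simp
  have hdir : z - x ≠ 0 := sub_ne_zero.2 hne
  have hnrm := nrm_bilinForm_pos hpos hdir
  refine le_of_forall_pos_le_add fun η hη => ?_
  have hline : Tendsto (fun t : ℝ => x + t • (z - x)) (𝓝[>] 0) (𝓝[≠] x) := by
    have hcont : Continuous fun t : ℝ => x + t • (z - x) := by fun_prop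
    refine tendsto_nhdsWithin_iff.2
      ⟨by simpa using (hcont.tendsto 0).mono_left nhdsWithin_le_nhds, ?_⟩
    filter_upwards [self_mem_nhdsWithin] with t ht
    simpa [hdir] using (Set.mem_Ioi.1 ht).ne'
  have hlt_one : ∀ᶠ t : ℝ in 𝓝[>] 0, t < 1 :=
    eventually_nhdsWithin_of_eventually_nhds (eventually_lt_nhds one_pos)
  obtain ⟨t, hlower, ht_lt, ht⟩ := ((hline.eventually ((regSubgrad_coe_iff hpos).1 hv
    (η / nrm (fun a b => B a b) (z - x)) (div_pos hη hnrm))).and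
    (hlt_one.and self_mem_nhdsWithin)).exists
  have hupper := hf.le_of_segment hx hz ht.le ht_lt.le
  rw [add_sub_cancel_left, nrm_bilinForm_smul ht.le, map_smul, smul_eq_mul, mul_left_comm,
    div_mul_cancel₀ _ hnrm.ne'] at hlower
  have hcurv : 0 ≤ t * t * (r * B (z - x) (z - x)) :=
    mul_nonneg (mul_self_nonneg t) (mul_nonneg hr (hpos _ hdir).le)
  refine le_of_mul_le_mul_left (a := t) ?_ ht
  linarith

lemma WeaklyConvexOn.hasQuadMinorantOn_of_limSubgrad [ContinuousSMul ℝ E]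
    (hf : WeaklyConvexOn B r V f) (hr : 0 ≤ r) (hpos : ∀ y ≠ 0, 0 < B y y)
    (hcont : Continuous fun p : E × E => B p.1 p.2) (hV : V ∈ 𝓝 x)
    (hv : LimSubgrad (fun a b => B a b) (fun y => (f y : EReal)) x v) :
    HasQuadMinorantOn B r V f x v := by
  obtain ⟨xs, vs, hreg, hxs, hvs, hfxs⟩ := hv
  have hfxs : Tendsto (fun k => f (xs k)) atTop (𝓝 (f x)) := EReal.tendsto_coe.1 hfxs
  intro z hz
  have hdir : Tendsto (fun k => z - xs k) atTop (𝓝 (z - x)) := hxs.const_sub z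
  have hlin := (hcont.tendsto (v, z - x)).comp (hvs.prodMk_nhds hdir)
  have hsq := (hcont.tendsto (z - x, z - x)).comp (hdir.prodMk_nhds hdir)
  refine le_of_tendsto ((hfxs.add hlin).sub (hsq.const_mul r)) ?_
  filter_upwards [hxs hV] with k hk
  exact hf.hasQuadMinorantOn hr hpos hk (hreg k) z hz

lemma WeaklyConvexOn.add_mul_nonpos_of_mem_limNormalCone (hf : WeaklyConvexOn B r V f)
    (hr : 0 ≤ r) (hB : ∀ y, 0 ≤ B y y) (hcont : Continuous fun p : E × E => B p.1 p.2)
    (hV : V ∈ 𝓝 x) {ν : E × ℝ}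
    (hν : ν ∈ limNormalCone (ipProd fun a b => B a b) (epiSet fun y => (f y : EReal)) (x, f x))
    {z : E} (hz : z ∈ V) {s : ℝ} (hs : f z ≤ s) :
    B ν.1 (z - x) + ν.2 * (s - f x + r * B (z - x) (z - x)) ≤ 0 := by
  obtain ⟨ps, νs, hps, hνs, hp, hν⟩ := hν
  have hp₁ : Tendsto (fun k => (ps k).1) atTop (𝓝 x) := hp.fst_nhds
  have hdir : Tendsto (fun k => z - (ps k).1) atTop (𝓝 (z - x)) := hp₁.const_sub z
  have hlin := (hcont.tendsto (ν.1, z - x)).comp (hν.fst_nhds.prodMk_nhds hdir)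
  have hsq := (hcont.tendsto (z - x, z - x)).comp (hdir.prodMk_nhds hdir)
  refine le_of_tendsto
    (hlin.add (hν.snd_nhds.mul ((hp.snd_nhds.const_sub s).add (hsq.const_mul r)))) ?_
  filter_upwards [hp₁ hV] with k hk
  exact hνs k _ (hf.mem_tangentCone_epiSet hr hB hk (mem_epiSet_coe.1 (hps k)) hz hs)

lemma mem_regNormalCone_epiSet_of_add_mul_nonpos [ContinuousSMul ℝ E]
    (hcont : Continuous fun p : E × E => B p.1 p.2) (hV : V ∈ 𝓝 x) {ν : E × ℝ}
    (hν : ∀ z ∈ V, ∀ s, f z ≤ s → B ν.1 (z - x) + ν.2 * (s - f x + r * B (z - x) (z - x)) ≤ 0) :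
    ν ∈ regNormalCone (ipProd fun a b => B a b) (epiSet fun y => (f y : EReal)) (x, f x) := by
  rintro w ⟨t, ws, ht, ht₀, hw, hmem⟩
  have hw₁ : Tendsto (fun k => (ws k).1) atTop (𝓝 w.1) := hw.fst_nhds
  have hlin := (hcont.tendsto (ν.1, w.1)).comp (tendsto_const_nhds.prodMk_nhds hw₁)
  have hsq := (hcont.tendsto (w.1, w.1)).comp (hw₁.prodMk_nhds hw₁)
  have hlim := hlin.add ((hw.snd_nhds.add (ht₀.mul (hsq.const_mul r))).const_mul ν.2)
  rw [zero_mul, add_zero] at hlim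
  have hpath : Tendsto (fun k => x + t k • (ws k).1) atTop (𝓝 x) := by
    simpa using (ht₀.smul hw₁).const_add x
  refine le_of_tendsto hlim ?_
  filter_upwards [hpath hV] with k hk
  have hle := hν _ hk _ (mem_epiSet_coe.1 (hmem k))
  simp only [Prod.snd_add, Prod.smul_snd, smul_eq_mul, add_sub_cancel_left, map_smul,
    LinearMap.smul_apply] at hle
  refine le_of_mul_le_mul_left (a := t k) ?_ (ht k)
  simp only [Function.comp_apply]
  linarith

theorem WeaklyConvexOn.subdiffRegularAt [ContinuousSMul ℝ E] (hf : WeaklyConvexOn B r V f)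
    (hr : 0 ≤ r) (hB : ∀ y, 0 ≤ B y y) (hcont : Continuous fun p : E × E => B p.1 p.2)
    (hV : V ∈ 𝓝 x) :
    SubdiffRegularAt (fun a b => B a b) (fun y => (f y : EReal)) x :=
  ⟨isFiniteAt_coe x, (regNormalCone_subset_limNormalCone (mem_epiSet_coe.2 le_rfl)).antisymm
    fun _ hν => mem_regNormalCone_epiSet_of_add_mul_nonpos hcont hV fun _ hz _ hs =>
      hf.add_mul_nonpos_of_mem_limNormalCone hr hB hcont hV hν hz hs⟩

end Subgradients

end FirstOrder

section TraceForm

lemma sq_dotProduct_le {m : Type*} [Fintype m] (x y : m → ℝ) :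
    (x ⬝ᵥ y) ^ 2 ≤ (x ⬝ᵥ x) * (y ⬝ᵥ y) := by
  simpa only [dotProduct, sq] using Finset.sum_mul_sq_le_sq_mul_sq Finset.univ x y

lemma sq_dotProduct_mulVec_le {m k : Type*} [Fintype m] [Fintype k] (D : Matrix m k ℝ)
    (x : m → ℝ) (y : k → ℝ) :
    (x ⬝ᵥ D *ᵥ y) ^ 2 ≤ (D * Dᵀ).trace * ((x ⬝ᵥ x) * (y ⬝ᵥ y)) := by
  have hrows : (D *ᵥ y) ⬝ᵥ (D *ᵥ y) ≤ (D * Dᵀ).trace * (y ⬝ᵥ y) := by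
    rw [Matrix.trace, Finset.sum_mul]
    refine Finset.sum_le_sum fun a _ => ?_
    rw [← sq]
    exact sq_dotProduct_le (D a) y
  calc (x ⬝ᵥ D *ᵥ y) ^ 2 ≤ (x ⬝ᵥ x) * ((D *ᵥ y) ⬝ᵥ (D *ᵥ y)) := sq_dotProduct_le _ _
    _ ≤ (x ⬝ᵥ x) * ((D * Dᵀ).trace * (y ⬝ᵥ y)) :=
      mul_le_mul_of_nonneg_left hrows (dotProduct_star_self_nonneg x)
    _ = (D * Dᵀ).trace * ((x ⬝ᵥ x) * (y ⬝ᵥ y)) := by ring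

variable {n : ℕ}

/-- The trace inner product `ipM` as a bilinear form. -/
def traceForm (n : ℕ) : LinearMap.BilinForm ℝ (Sym n) :=
  LinearMap.mk₂ ℝ ipM (fun A B C => by simp [ipM, add_mul]) (fun t A B => by simp [ipM])
    (fun A B C => by simp [ipM, mul_add]) (fun t A B => by simp [ipM])

lemma Sym.isHermitian (A : Sym n) : A.val.IsHermitian :=
  (Matrix.conjTranspose_eq_transpose_of_trivial A.val).trans A.2

lemma traceForm_self (A : Sym n) : traceForm n A A = (A.val * A.valᵀ).trace := by
  rw [show A.valᵀ = A.val from A.2]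
  rfl

lemma continuous_traceForm : Continuous fun p : Sym n × Sym n => traceForm n p.1 p.2 := by
  change Continuous fun p : Sym n × Sym n => (p.1.val * p.2.val).trace
  fun_prop

lemma traceForm_self_nonneg (A : Sym n) : 0 ≤ traceForm n A A := by
  rw [traceForm_self, ← Matrix.conjTranspose_eq_transpose_of_trivial]
  exact (Matrix.posSemidef_self_mul_conjTranspose A.val).trace_nonneg

lemma traceForm_self_pos (A : Sym n) (hA : A ≠ 0) : 0 < traceForm n A A := by
  refine (traceForm_self_nonneg A).lt_of_ne' fun h => hA (Subtype.ext ?_)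
  rwa [traceForm_self, ← Matrix.conjTranspose_eq_transpose_of_trivial,
    Matrix.trace_mul_conjTranspose_self_eq_zero_iff] at h

lemma nrm_ipM_sq (A : Sym n) : nrm ipM A ^ 2 = traceForm n A A :=
  Real.sq_sqrt (traceForm_self_nonneg A)

lemma nrm_ipM_sub_comm (A B : Sym n) : nrm ipM (A - B) = nrm ipM (B - A) :=
  congrArg Real.sqrt (bilinForm_sub_self_comm (B := traceForm n) A B)

lemma continuous_nrm_ipM : Continuous fun A : Sym n => nrm ipM A :=
  (continuous_traceForm.comp (continuous_id.prodMk continuous_id)).sqrt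

lemma abs_dotProduct_mulVec_self_le (A : Sym n) (x : Fin n → ℝ) :
    |x ⬝ᵥ A.val *ᵥ x| ≤ nrm ipM A * (x ⬝ᵥ x) := by
  refine abs_le_of_sq_le_sq ?_ (mul_nonneg (Real.sqrt_nonneg _) (dotProduct_star_self_nonneg x))
  rw [mul_pow, nrm_ipM_sq, sq (x ⬝ᵥ x), traceForm_self]
  exact sq_dotProduct_mulVec_le A.val x x

/-- The rank-one symmetric matrix `u uᵀ`. -/
def rankOne (u : Fin n → ℝ) : Sym n :=
  ⟨Matrix.vecMulVec u u, Matrix.transpose_vecMulVec u u⟩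

lemma traceForm_rankOne (u : Fin n → ℝ) (A : Sym n) :
    traceForm n (rankOne u) A = u ⬝ᵥ A.val *ᵥ u := by
  change (Matrix.vecMulVec u u * A.val).trace = _
  rw [Matrix.trace_mul_comm, Matrix.mul_vecMulVec, Matrix.trace_vecMulVec, dotProduct_comm]

end TraceForm

section Spectral

variable {n : ℕ} {A U : Matrix (Fin n) (Fin n) ℝ} {κ : Type*}

lemma mulVec_dotProduct_mulVec_of_transpose_mul_self [Fintype κ] [DecidableEq κ]
    {m : Type*} [Fintype m] {V : Matrix m κ ℝ} (hV : Vᵀ * V = 1) (x y : κ → ℝ) :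
    (V *ᵥ x) ⬝ᵥ (V *ᵥ y) = x ⬝ᵥ y := by
  rw [dotProduct_mulVec, ← mulVec_transpose, mulVec_mulVec, hV, one_mulVec]

lemma eigval_antitone (A : Matrix (Fin n) (Fin n) ℝ) : Antitone (eigval A) := by
  unfold eigval
  split_ifs with hA
  · exact fun j k hjk => neg_le_neg_iff.1 (Tuple.monotone_sort (fun j => -hA.eigenvalues j) hjk)
  · exact antitone_const

lemma exists_orthogonal_eq_conj_diagonal {ι : Type*} [Fintype ι] [DecidableEq ι]
    {M : Matrix ι ι ℝ} (hM : M.IsHermitian) :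
    ∃ V : Matrix ι ι ℝ, V * Vᵀ = 1 ∧ M = V * diagonal hM.eigenvalues * Vᵀ := by
  refine ⟨hM.eigenvectorUnitary.val, ?_, ?_⟩
  · simpa only [Unitary.coe_star, Matrix.star_eq_conjTranspose,
      Matrix.conjTranspose_eq_transpose_of_trivial] using
      Unitary.coe_mul_star_self hM.eigenvectorUnitary
  · have := hM.spectral_theorem
    rwa [Unitary.conjStarAlgAut_apply, Matrix.star_eq_conjTranspose,
      Matrix.conjTranspose_eq_transpose_of_trivial] at this

lemma eigOrth_nonempty (hA : A.IsHermitian) : (eigOrth A).Nonempty := by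
  obtain ⟨V, hV, hspec⟩ := exists_orthogonal_eq_conj_diagonal hA
  set σ := Tuple.sort fun j => -hA.eigenvalues j
  have heig : eigval A = hA.eigenvalues ∘ σ := dif_pos hA
  refine ⟨V.submatrix id σ, ?_, ?_⟩
  · rw [transpose_submatrix, submatrix_mul_equiv, hV, submatrix_id_id]
  · rw [heig, ← submatrix_diagonal_equiv, transpose_submatrix, submatrix_mul_equiv,
      submatrix_mul_equiv, ← hspec, submatrix_id_id]

lemma transpose_mul_self_of_mem_eigOrth (hU : U ∈ eigOrth A) : Uᵀ * U = 1 :=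
  mul_eq_one_comm.1 hU.1

lemma transpose_mul_of_mem_eigOrth (hU : U ∈ eigOrth A) :
    Uᵀ * A = diagonal (eigval A) * Uᵀ := by
  conv_lhs => rw [hU.2]
  rw [← Matrix.mul_assoc, ← Matrix.mul_assoc, transpose_mul_self_of_mem_eigOrth hU, Matrix.one_mul]

lemma transpose_mul_self_submatrix_id [DecidableEq κ] {s : κ → Fin n} (hU : U ∈ eigOrth A)
    (hs : Function.Injective s) : (U.submatrix id s)ᵀ * U.submatrix id s = 1 := by
  rw [transpose_submatrix, ← submatrix_mul _ _ s id s Function.bijective_id,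
    transpose_mul_self_of_mem_eigOrth hU, submatrix_one s hs]

variable [Fintype κ]

lemma mul_submatrix_id_of_mem_eigOrth [DecidableEq κ] (hU : U ∈ eigOrth A) (s : κ → Fin n) :
    A * U.submatrix id s = U.submatrix id s * diagonal (eigval A ∘ s) := by
  have hAU : A * U = U * diagonal (eigval A) := by
    conv_lhs => rw [hU.2]
    rw [Matrix.mul_assoc, transpose_mul_self_of_mem_eigOrth hU, Matrix.mul_one]
  ext a k
  have hcol := congrFun (congrFun hAU a) (s k)
  rw [mul_diagonal] at hcol ⊢
  exact hcol

lemma mul_dotProduct_self_le_of_mem_eigOrth {s : κ → Fin n} (hU : U ∈ eigOrth A)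
    (hs : Function.Injective s) {b : ℝ} (hb : ∀ k, b ≤ eigval A (s k)) (c : κ → ℝ) :
    b * (c ⬝ᵥ c) ≤ (U.submatrix id s *ᵥ c) ⬝ᵥ A *ᵥ (U.submatrix id s *ᵥ c) := by
  classical
  rw [mulVec_mulVec, mul_submatrix_id_of_mem_eigOrth hU, ← mulVec_mulVec,
    mulVec_dotProduct_mulVec_of_transpose_mul_self (transpose_mul_self_submatrix_id hU hs),
    dotProduct, dotProduct, Finset.mul_sum]
  refine Finset.sum_le_sum fun k _ => ?_
  rw [mulVec_diagonal, Function.comp_apply, mul_left_comm (c k)]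
  exact mul_le_mul_of_nonneg_right (hb k) (mul_self_nonneg _)

lemma dotProduct_mulVec_le_of_mem_eigOrth (hU : U ∈ eigOrth A) {b : ℝ} {x : Fin n → ℝ}
    (hx : ∀ j, b < eigval A j → (Uᵀ *ᵥ x) j = 0) : x ⬝ᵥ A *ᵥ x ≤ b * (x ⬝ᵥ x) := by
  have hUU : Uᵀᵀ * Uᵀ = 1 := hU.1
  rw [← mulVec_dotProduct_mulVec_of_transpose_mul_self hUU x (A *ᵥ x),
    ← mulVec_dotProduct_mulVec_of_transpose_mul_self hUU x x, mulVec_mulVec,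
    transpose_mul_of_mem_eigOrth hU, ← mulVec_mulVec, dotProduct, dotProduct, Finset.mul_sum]
  refine Finset.sum_le_sum fun j _ => ?_
  rw [mulVec_diagonal, mul_left_comm]
  obtain hj | hj := lt_or_ge b (eigval A j)
  · simp [hx j hj]
  · exact mul_le_mul_of_nonneg_right hj (mul_self_nonneg _)

/- Courant–Fischer: the `card κ > i` dimensional range of `V` meets the span of the eigenvectors
with indices `≥ i`. -/
lemma le_eigval_of_forall_mul_dotProduct_le [DecidableEq κ] (hA : A.IsHermitian) {i : Fin n}
    (hi : (i : ℕ) < Fintype.card κ) {V : Matrix (Fin n) κ ℝ} (hV : Vᵀ * V = 1) {b : ℝ}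
    (hb : ∀ c, b * (c ⬝ᵥ c) ≤ (V *ᵥ c) ⬝ᵥ A *ᵥ (V *ᵥ c)) : b ≤ eigval A i := by
  obtain ⟨U, hU⟩ := eigOrth_nonempty hA
  let firstCoeffs := ((Uᵀ * V).submatrix (Subtype.val : {j // j < i} → Fin n) id).mulVecLin
  have hker : LinearMap.ker firstCoeffs ≠ ⊥ :=
    LinearMap.ker_ne_bot_of_finrank_lt (by simpa [Fintype.card_of_subtype (Finset.Iio i)] using hi)
  obtain ⟨c, hc, hc₀⟩ := Submodule.exists_mem_ne_zero_of_ne_bot hker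
  have hcoeff (j : Fin n) (hj : eigval A i < eigval A j) : (Uᵀ *ᵥ V *ᵥ c) j = 0 := by
    rw [mulVec_mulVec]
    exact congrFun (LinearMap.mem_ker.1 hc) ⟨j, (eigval_antitone A).reflect_lt hj⟩
  have hupper := dotProduct_mulVec_le_of_mem_eigOrth hU hcoeff
  rw [mulVec_dotProduct_mulVec_of_transpose_mul_self hV] at hupper
  have hpos : 0 < c ⬝ᵥ c :=
    (dotProduct_star_self_nonneg c).lt_of_ne' fun h => hc₀ (dotProduct_self_eq_zero.1 h)
  exact le_of_mul_le_mul_right ((hb c).trans hupper) hpos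

lemma dotProduct_sub_mulVec (Y Z : Sym n) (x : Fin n → ℝ) :
    x ⬝ᵥ (Z - Y).val *ᵥ x = x ⬝ᵥ Z.val *ᵥ x - x ⬝ᵥ Y.val *ᵥ x := by
  rw [← dotProduct_sub, ← sub_mulVec]
  rfl

lemma eigval_sub_nrm_le (Y Z : Sym n) (i : Fin n) :
    eigval Y.val i - nrm ipM (Z - Y) ≤ eigval Z.val i := by
  obtain ⟨U, hU⟩ := eigOrth_nonempty Y.isHermitian
  have hV := transpose_mul_self_submatrix_id hU
    (Subtype.val_injective : Function.Injective (Subtype.val : {j // j ≤ i} → Fin n))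
  refine le_eigval_of_forall_mul_dotProduct_le Z.isHermitian
    (by simp [Fintype.card_of_subtype (Finset.Iic i)]) hV fun c => ?_
  have hY := mul_dotProduct_self_le_of_mem_eigOrth hU Subtype.val_injective
    (fun k : {j // j ≤ i} => eigval_antitone Y.val k.2) c
  have hZ := (abs_le.1 (abs_dotProduct_mulVec_self_le (Z - Y) (U.submatrix id Subtype.val *ᵥ c))).1
  rw [dotProduct_sub_mulVec, mulVec_dotProduct_mulVec_of_transpose_mul_self hV] at hZ
  linarith

lemma continuous_eigval (i : Fin n) : Continuous fun A : Sym n => eigval A.val i := by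
  refine continuous_iff_continuousAt.2 fun X => ?_
  have hnrm : Tendsto (fun Z : Sym n => nrm ipM (Z - X)) (𝓝 X) (𝓝 0) := by
    simpa [nrm, ipM, Function.comp_def] using
      (continuous_nrm_ipM.comp (continuous_sub_right X)).tendsto X
  refine tendsto_of_tendsto_of_tendsto_of_le_of_le
    (by simpa using hnrm.const_sub (eigval X.val i))
    (by simpa using hnrm.const_add (eigval X.val i))
    (fun Z => eigval_sub_nrm_le X Z i) fun Z => ?_
  have hle := eigval_sub_nrm_le Z X i
  rw [nrm_ipM_sub_comm] at hle
  simp only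
  linarith

/-- The unit eigenvectors of `A` for its `i`-th largest eigenvalue. -/
def unitEigenvectors (A : Matrix (Fin n) (Fin n) ℝ) (i : Fin n) : Set (Fin n → ℝ) :=
  {u | u ⬝ᵥ u = 1 ∧ A *ᵥ u = eigval A i • u}

lemma submatrix_id_mulVec_mem_unitEigenvectors {s : κ → Fin n} (hU : U ∈ eigOrth A)
    (hs : Function.Injective s) {i : Fin n} (hi : ∀ k, eigval A (s k) = eigval A i) {c : κ → ℝ}
    (hc : c ⬝ᵥ c = 1) : U.submatrix id s *ᵥ c ∈ unitEigenvectors A i := by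
  classical
  refine ⟨?_, ?_⟩
  · rw [mulVec_dotProduct_mulVec_of_transpose_mul_self (transpose_mul_self_submatrix_id hU hs), hc]
  · rw [mulVec_mulVec, mul_submatrix_id_of_mem_eigOrth hU, ← mulVec_mulVec, ← mulVec_smul]
    congr 1
    ext k
    rw [mulVec_diagonal, Function.comp_apply, hi, Pi.smul_apply, smul_eq_mul]

lemma col_mem_unitEigenvectors (hU : U ∈ eigOrth A) {i j : Fin n}
    (hj : eigval A j = eigval A i) : U.col j ∈ unitEigenvectors A i := by
  have hmem := submatrix_id_mulVec_mem_unitEigenvectors (s := fun _ : Unit => j) (c := 1) hU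
    (Function.injective_of_subsingleton _) (fun _ => hj) (by simp)
  have hcol : U.submatrix id (fun _ : Unit => j) *ᵥ 1 = U.col j := by
    ext k
    simp [mulVec, dotProduct]
  rwa [hcol] at hmem

lemma unitEigenvectors_nonempty (hA : A.IsHermitian) (i : Fin n) :
    (unitEigenvectors A i).Nonempty := by
  obtain ⟨U, hU⟩ := eigOrth_nonempty hA
  exact ⟨U.col i, col_mem_unitEigenvectors hU rfl⟩

lemma transpose_mulVec_eq_zero_of_eigval_ne (hU : U ∈ eigOrth A) {u : Fin n → ℝ} {μ : ℝ}
    (hu : A *ᵥ u = μ • u) {j : Fin n} (hj : eigval A j ≠ μ) : (Uᵀ *ᵥ u) j = 0 := by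
  have hcoeff : eigval A j * (Uᵀ *ᵥ u) j = μ * (Uᵀ *ᵥ u) j := by
    rw [← mulVec_diagonal, mulVec_mulVec, ← transpose_mul_of_mem_eigOrth hU, ← mulVec_mulVec, hu,
      mulVec_smul, Pi.smul_apply, smul_eq_mul]
  exact (mul_eq_mul_right_iff.1 hcoeff).resolve_left hj

end Spectral

section WeakConvexityEigval

variable {n : ℕ}

lemma dotProduct_mulVec_add_smul {m : Type*} [Fintype m] {M : Matrix m m ℝ} (hM : M.IsSymm)
    (p u : m → ℝ) (b : ℝ) : (p + b • u) ⬝ᵥ M *ᵥ (p + b • u) =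
      p ⬝ᵥ M *ᵥ p + 2 * b * (u ⬝ᵥ M *ᵥ p) + b ^ 2 * (u ⬝ᵥ M *ᵥ u) := by
  have hcomm : p ⬝ᵥ M *ᵥ u = u ⬝ᵥ M *ᵥ p := by
    rw [dotProduct_mulVec, ← mulVec_transpose, hM, dotProduct_comm]
  simp only [mulVec_add, mulVec_smul, dotProduct_add, add_dotProduct, dotProduct_smul,
    smul_dotProduct, smul_eq_mul, hcomm]
  ring

lemma abs_two_mul_mul_le {g q w s : ℝ} (hg : 0 < g) (hq : 0 ≤ q) (hw : 0 ≤ w)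
    (hs : s ^ 2 ≤ q * w) (b : ℝ) : |2 * b * s| ≤ g / 2 * w + 2 / g * q * b ^ 2 := by
  refine abs_le_of_sq_le_sq ?_ (by positivity)
  have hcross : (g / 2 * w) * (2 / g * q * b ^ 2) = q * w * b ^ 2 := by
    field_simp
  calc (2 * b * s) ^ 2 = 4 * (s ^ 2 * b ^ 2) := by ring
    _ ≤ 4 * (g / 2 * w * (2 / g * q * b ^ 2)) := by rw [hcross]; gcongr
    _ ≤ (g / 2 * w + 2 / g * q * b ^ 2) ^ 2 := by
      rw [← mul_assoc]
      exact four_mul_le_sq_add _ _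

/- The cross term between `p` and `u` is absorbed half by the spectral gap `g` and half by the
quadratic error `2 / g * ‖Z - Y‖²`. -/
lemma mul_dotProduct_self_le_of_gap {Y Z : Sym n} {g μ : ℝ} (hg : 0 < g)
    (hclose : 4 * nrm ipM (Z - Y) ≤ g) {u p : Fin n → ℝ} (hu : u ⬝ᵥ u = 1)
    (hYu : Y.val *ᵥ u = μ • u) (hup : u ⬝ᵥ p = 0)
    (hYp : (μ + g) * (p ⬝ᵥ p) ≤ p ⬝ᵥ Y.val *ᵥ p) (b : ℝ) :
    (μ + u ⬝ᵥ (Z - Y).val *ᵥ u - 2 / g * traceForm n (Z - Y) (Z - Y)) *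
        ((p + b • u) ⬝ᵥ (p + b • u)) ≤ (p + b • u) ⬝ᵥ Z.val *ᵥ (p + b • u) := by
  have hYup : u ⬝ᵥ Y.val *ᵥ p = 0 := by
    rw [dotProduct_mulVec, ← mulVec_transpose, show Y.valᵀ = Y.val from Y.2, hYu, smul_dotProduct,
      hup, smul_zero]
  have hYuu : u ⬝ᵥ Y.val *ᵥ u = μ := by rw [hYu, dotProduct_smul, hu, smul_eq_mul, mul_one]
  have hnorm : (p + b • u) ⬝ᵥ (p + b • u) = p ⬝ᵥ p + b ^ 2 := by
    have := dotProduct_mulVec_add_smul (M := 1) Matrix.isSymm_one p u b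
    simpa [hup, hu] using this
  have hY := dotProduct_mulVec_add_smul Y.2 p u b
  have hD := dotProduct_mulVec_add_smul (Z - Y).2 p u b
  rw [hYup, hYuu] at hY
  rw [dotProduct_sub_mulVec Y Z (p + b • u)] at hD
  set w := p ⬝ᵥ p
  have hw : 0 ≤ w := dotProduct_star_self_nonneg p
  set N := nrm ipM (Z - Y)
  have hpp := (abs_le.1 (abs_dotProduct_mulVec_self_le (Z - Y) p)).1
  have huu := (abs_le.1 (abs_dotProduct_mulVec_self_le (Z - Y) u)).2
  have hq := traceForm_self_nonneg (Z - Y)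
  have hcross_sq := sq_dotProduct_mulVec_le (Z - Y).val u p
  rw [← traceForm_self, hu, one_mul] at hcross_sq
  have hcross := (abs_le.1 (abs_two_mul_mul_le hg hq hw hcross_sq b)).1
  rw [hu, mul_one] at huu
  have hgw := mul_le_mul_of_nonneg_right hclose hw
  have huw := mul_le_mul_of_nonneg_right huu hw
  have hqw : 0 ≤ 2 / g * traceForm n (Z - Y) (Z - Y) * w := by positivity
  rw [hnorm]
  linarith

lemma transpose_mul_self_fromCols_replicateCol {m κ : Type*} [Fintype m] [DecidableEq κ]
    {P : Matrix m κ ℝ} (hP : Pᵀ * P = 1) {u : m → ℝ} (hPu : Pᵀ *ᵥ u = 0) (hu : u ⬝ᵥ u = 1) :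
    (fromCols P (replicateCol Unit u))ᵀ * fromCols P (replicateCol Unit u) = 1 := by
  have hcross : Pᵀ * replicateCol Unit u = 0 := by
    rw [← replicateCol_mulVec, hPu, replicateCol_zero]
  have hunit : (replicateCol Unit u)ᵀ * replicateCol Unit u = 1 := by
    ext a b
    simpa [mul_apply, dotProduct] using hu
  have hcross' : (replicateCol Unit u)ᵀ * P = 0 := by
    rw [← transpose_transpose P, ← transpose_mul, hcross, transpose_zero]
  rw [transpose_fromCols, fromRows_mul_fromCols, hP, hcross, hcross', hunit, fromBlocks_one]

lemma eigval_add_le_of_gap {Y Z : Sym n} {i : Fin n} {g : ℝ} (hg : 0 < g)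
    (hgap : ∀ j < i, eigval Y.val i + g ≤ eigval Y.val j) (hclose : 4 * nrm ipM (Z - Y) ≤ g)
    {u : Fin n → ℝ} (hu : u ∈ unitEigenvectors Y.val i) :
    eigval Y.val i + u ⬝ᵥ (Z - Y).val *ᵥ u - 2 / g * traceForm n (Z - Y) (Z - Y) ≤
      eigval Z.val i := by
  obtain ⟨U, hU⟩ := eigOrth_nonempty Y.isHermitian
  set P := U.submatrix id (Subtype.val : {j // j < i} → Fin n)
  have hP : Pᵀ * P = 1 := transpose_mul_self_submatrix_id hU Subtype.val_injective
  have hPu : Pᵀ *ᵥ u = 0 := funext fun j =>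
    transpose_mulVec_eq_zero_of_eigval_ne hU hu.2 (by linarith [hgap j j.2])
  set V := fromCols P (replicateCol Unit u)
  have hV : Vᵀ * V = 1 := transpose_mul_self_fromCols_replicateCol hP hPu hu.1
  refine le_eigval_of_forall_mul_dotProduct_le Z.isHermitian
    (by simp [Fintype.card_of_subtype (Finset.Iio i)]) hV fun c => ?_
  have hVc : V *ᵥ c = P *ᵥ (c ∘ Sum.inl) + c (Sum.inr ()) • u := by
    rw [fromCols_mulVec]
    congr 1
    ext a
    simp [mulVec, dotProduct, mul_comm]
  rw [← mulVec_dotProduct_mulVec_of_transpose_mul_self hV c c, hVc]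
  refine mul_dotProduct_self_le_of_gap hg hclose hu.1 hu.2 ?_ ?_ _
  · rw [dotProduct_mulVec, ← mulVec_transpose, hPu, zero_dotProduct]
  · rw [mulVec_dotProduct_mulVec_of_transpose_mul_self hP]
    exact mul_dotProduct_self_le_of_mem_eigOrth hU Subtype.val_injective (fun j => hgap j j.2) _

end WeakConvexityEigval

section LeadingEigenvalue

variable {n : ℕ} {X : Sym n} {i : Fin n}

lemma exists_gap_of_forall_lt {ι : Type*} [Finite ι] {p : ι → Prop} {a : ℝ} {b : ι → ℝ}
    (h : ∀ j, p j → a < b j) : ∃ g > 0, ∀ j, p j → a + g ≤ b j := by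
  have hev : ∀ᶠ g in 𝓝[>] (0 : ℝ), ∀ j, p j → a + g ≤ b j := by
    refine eventually_all.2 fun j => eventually_imp_distrib_left.2 fun hj => ?_
    have hlt : a + 0 < b j := by simpa using h j hj
    have htend : Tendsto (fun g => a + g) (𝓝[>] 0) (𝓝 (a + 0)) :=
      (tendsto_id.mono_left nhdsWithin_le_nhds).const_add a
    exact (htend.eventually_lt_const hlt).mono fun _ hg => hg.le
  obtain ⟨g, hgap, hg⟩ := (hev.and self_mem_nhdsWithin).exists
  exact ⟨g, hg, hgap⟩

lemma nrm_ipM_sub_le_two_mul {Y Z : Sym n} {δ : ℝ} (hδ : 0 ≤ δ)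
    (hY : traceForm n (Y - X) (Y - X) ≤ δ ^ 2) (hZ : traceForm n (Z - X) (Z - X) ≤ δ ^ 2) :
    nrm ipM (Z - Y) ≤ 2 * δ := by
  have hle := bilinForm_sub_self_le traceForm_self_nonneg (Z - X) (Y - X)
  rw [sub_sub_sub_cancel_right] at hle
  exact Real.sqrt_le_iff.2 ⟨by positivity, hle.trans (by linarith)⟩

theorem exists_nhds_hasQuadMinorantOn_rankOne
    (hlead : ∀ j < i, eigval X.val i < eigval X.val j) :
    ∃ V ∈ 𝓝 X, ∃ r : ℝ, 0 ≤ r ∧ Convex ℝ V ∧ ∀ Y ∈ V, ∀ u ∈ unitEigenvectors Y.val i,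
      HasQuadMinorantOn (traceForm n) r V (fun A => eigval A.val i) Y (rankOne u) := by
  obtain ⟨g, hg, hgap⟩ := exists_gap_of_forall_lt hlead
  set δ := g / 10
  have hδ : 0 < δ := by positivity
  refine ⟨{Y | traceForm n (Y - X) (Y - X) ≤ δ ^ 2},
    bilinForm_closedBall_mem_nhds continuous_traceForm X (by positivity), 2 / (8 * δ),
    by positivity, convex_bilinForm_closedBall traceForm_self_nonneg X _,
    fun Y hY u hu Z hZ => ?_⟩
  have hXY : nrm ipM (Y - X) ≤ δ := Real.sqrt_le_iff.2 ⟨hδ.le, hY⟩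
  rw [traceForm_rankOne]
  refine eigval_add_le_of_gap (by positivity) (fun j hj => ?_) ?_ hu
  · have hj_lower := eigval_sub_nrm_le X Y j
    have hi_upper := eigval_sub_nrm_le Y X i
    rw [nrm_ipM_sub_comm] at hi_upper
    linarith [hgap j hj, show g = 10 * δ by ring]
  · linarith [nrm_ipM_sub_le_two_mul hδ.le hY hZ]

lemma isCompact_setOf_dotProduct_self_eq_one {m : Type*} [Fintype m] :
    IsCompact {u : m → ℝ | u ⬝ᵥ u = 1} := by
  refine Metric.isCompact_of_isClosed_isBounded
    (isClosed_eq (by fun_prop) continuous_const)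
    ((Metric.isBounded_iff_subset_closedBall 0).2 ⟨1, fun u hu => ?_⟩)
  rw [mem_closedBall_zero_iff, pi_norm_le_iff_of_nonneg zero_le_one]
  intro j
  rw [Real.norm_eq_abs, abs_le_one_iff_mul_self_le_one, ← (show u ⬝ᵥ u = 1 from hu)]
  exact Finset.single_le_sum (f := fun j => u j * u j) (fun j _ => mul_self_nonneg (u j))
    (Finset.mem_univ j)

lemma eventually_forall_unitEigenvectors_lt {H : Sym n} {a : ℝ}
    (h : ∀ u ∈ unitEigenvectors X.val i, u ⬝ᵥ H.val *ᵥ u < a) :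
    ∀ᶠ p : Sym n × Sym n in 𝓝 (X, H), ∀ u ∈ unitEigenvectors p.1.val i,
      u ⬝ᵥ p.2.val *ᵥ u < a := by
  have hclosed : IsClosed {q : (Sym n × Sym n) × (Fin n → ℝ) |
      q.1.1.val *ᵥ q.2 = eigval q.1.1.val i • q.2 ∧ a ≤ q.2 ⬝ᵥ q.1.2.val *ᵥ q.2} := by
    have heig : Continuous fun q : (Sym n × Sym n) × (Fin n → ℝ) => eigval q.1.1.val i :=
      (continuous_eigval i).comp (continuous_fst.comp continuous_fst)
    rw [Set.ofPred_and]
    exact (isClosed_eq (by fun_prop) (by fun_prop)).inter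
      (isClosed_le continuous_const (by fun_prop))
  have hsphere : ∀ᶠ p : Sym n × Sym n in 𝓝 (X, H), ∀ u ∈ {u : Fin n → ℝ | u ⬝ᵥ u = 1},
      ¬(p.1.val *ᵥ u = eigval p.1.val i • u ∧ a ≤ u ⬝ᵥ p.2.val *ᵥ u) :=
    isCompact_setOf_dotProduct_self_eq_one.eventually_forall_of_forall_eventually fun u hu =>
      hclosed.isOpen_compl.mem_nhds fun hmem => (h u ⟨hu, hmem.1⟩).not_ge hmem.2
  filter_upwards [hsphere] with p hp u hu
  exact lt_of_not_ge fun hge => hp u hu.1 ⟨hu.2, hge⟩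

theorem tendsto_diffQuotient_eigval (hlead : ∀ j < i, eigval X.val i < eigval X.val j)
    {H : Sym n} {d : ℝ}
    (hd : IsGreatest ((fun u => u ⬝ᵥ H.val *ᵥ u) '' unitEigenvectors X.val i) d) :
    Tendsto (fun p : ℝ × Sym n => p.1⁻¹ * (eigval (X + p.1 • p.2).val i - eigval X.val i))
      (𝓝[>] 0 ×ˢ 𝓝 H) (𝓝 d) := by
  obtain ⟨V, hV, r, -, -, hminorant⟩ := exists_nhds_hasQuadMinorantOn_rankOne hlead
  have hS : ∀ Y ∈ V, ∀ v ∈ rankOne '' unitEigenvectors Y.val i,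
      HasQuadMinorantOn (traceForm n) r V (fun A => eigval A.val i) Y v :=
    fun Y hY => Set.forall_mem_image.2 (hminorant Y hY)
  obtain ⟨⟨u, hu, hud⟩, hupper⟩ := hd
  have hattained : ∃ v ∈ rankOne '' unitEigenvectors X.val i, traceForm n v H = d :=
    ⟨rankOne u, Set.mem_image_of_mem _ hu, (traceForm_rankOne u H).trans hud⟩
  have hlt : ∀ a > d, ∀ᶠ p : Sym n × Sym n in 𝓝 X ×ˢ 𝓝 H,
      ∀ v ∈ rankOne '' unitEigenvectors p.1.val i, traceForm n v p.2 < a := by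
    intro a ha
    rw [← nhds_prod_eq]
    filter_upwards [eventually_forall_unitEigenvectors_lt fun u hu =>
      (hupper (Set.mem_image_of_mem _ hu)).trans_lt ha] with p hp
    rintro _ ⟨u, hu, rfl⟩
    rw [traceForm_rankOne]
    exact hp u hu
  exact tendsto_diffQuotient_of_quadMinorants continuous_traceForm hV
    (fun Y _ => (unitEigenvectors_nonempty Y.isHermitian i).image _) hS hattained hlt

lemma tendsto_dirQuotient_eigval (hlead : ∀ j < i, eigval X.val i < eigval X.val j)
    {H : Sym n} {d : ℝ}
    (hd : IsGreatest ((fun u => u ⬝ᵥ H.val *ᵥ u) '' unitEigenvectors X.val i) d) :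
    Tendsto (fun t : ℝ => t⁻¹ * (eigval (X + t • H).val i - eigval X.val i)) (𝓝[>] 0) (𝓝 d) :=
  (tendsto_diffQuotient_eigval hlead hd).comp (tendsto_id.prodMk tendsto_const_nhds)

end LeadingEigenvalue

section RayleighBlock

variable {n : ℕ} {A U : Matrix (Fin n) (Fin n) ℝ} {i : Fin n}

lemma isGreatest_eigval_zero (hA : A.IsHermitian) (hn : 0 < n) :
    IsGreatest ((fun y => y ⬝ᵥ A *ᵥ y) '' {y | y ⬝ᵥ y = 1}) (eigval A ⟨0, hn⟩) := by
  refine ⟨?_, Set.forall_mem_image.2 fun y hy => ?_⟩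
  · obtain ⟨y, hy, hAy⟩ := unitEigenvectors_nonempty hA ⟨0, hn⟩
    refine ⟨y, hy, ?_⟩
    simp only [hAy, dotProduct_smul, hy, smul_eq_mul, mul_one]
  · obtain ⟨U, hU⟩ := eigOrth_nonempty hA
    have hle := dotProduct_mulVec_le_of_mem_eigOrth (b := eigval A ⟨0, hn⟩) (x := y) hU
      fun j hj => absurd (eigval_antitone A (Nat.zero_le j)) hj.not_ge
    rwa [show y ⬝ᵥ y = 1 from hy, mul_one] at hle

lemma submatrix_id_mulVec_transpose_mulVec {κ : Type*} [Fintype κ] {s : κ → Fin n}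
    (hU : U ∈ eigOrth A) (hs : Function.Injective s)
    (hrange : ∀ j, eigval A j = eigval A i → j ∈ Set.range s) {u : Fin n → ℝ}
    (hu : A *ᵥ u = eigval A i • u) :
    U.submatrix id s *ᵥ ((U.submatrix id s)ᵀ *ᵥ u) = u := by
  have hoff : ∀ j ∉ Set.range s, (Uᵀ *ᵥ u) j = 0 := fun j hj =>
    transpose_mulVec_eq_zero_of_eigval_ne hU hu (mt (hrange j) hj)
  calc U.submatrix id s *ᵥ ((U.submatrix id s)ᵀ *ᵥ u) = U *ᵥ (Uᵀ *ᵥ u) :=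
        funext fun a => Fintype.sum_of_injective s hs _ _
          (fun j hj => by rw [hoff j hj, mul_zero]) fun _ => rfl
    _ = u := by rw [mulVec_mulVec, hU.1, one_mulVec]

lemma unitEigenvectors_eq_image {κ : Type*} [Fintype κ] {s : κ → Fin n}
    (hU : U ∈ eigOrth A) (hs : Function.Injective s)
    (hrange : ∀ j, eigval A j = eigval A i ↔ j ∈ Set.range s) :
    unitEigenvectors A i = (fun c => U.submatrix id s *ᵥ c) '' {c | c ⬝ᵥ c = 1} := by
  classical
  refine Set.Subset.antisymm (fun u hu => ?_) (Set.image_subset_iff.2 fun c hc => ?_)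
  · have hPu := submatrix_id_mulVec_transpose_mulVec hU hs (fun j => (hrange j).1) hu.2
    refine ⟨(U.submatrix id s)ᵀ *ᵥ u, ?_, hPu⟩
    rw [Set.mem_ofPred_eq, ← mulVec_dotProduct_mulVec_of_transpose_mul_self
      (transpose_mul_self_submatrix_id hU hs), hPu, hu.1]
  · exact submatrix_id_mulVec_mem_unitEigenvectors hU hs
      (fun k => (hrange _).2 (Set.mem_range_self k)) hc

lemma blockEmb_injective (A : Matrix (Fin n) (Fin n) ℝ) (i : Fin n) :
    Function.Injective (blockEmb A i) :=
  Subtype.val_injective.comp ((blockSet A i).orderIsoOfFin rfl).injective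

lemma mem_range_blockEmb_iff (A : Matrix (Fin n) (Fin n) ℝ) (i j : Fin n) :
    eigval A j = eigval A i ↔ j ∈ Set.range (blockEmb A i) := by
  have hrange : Set.range (blockEmb A i) = blockSet A i :=
    (Set.range_comp Subtype.val _).trans <| by
      rw [((blockSet A i).orderIsoOfFin rfl).surjective.range_eq, Set.image_univ,
        Subtype.range_coe]
  rw [hrange, Finset.mem_coe, blockSet, Finset.mem_filter_univ]

lemma blockMat_conj (A M U : Matrix (Fin n) (Fin n) ℝ) (i : Fin n) :
    blockMat A (Uᵀ * M * U) i =
      (U.submatrix id (blockEmb A i))ᵀ * M * U.submatrix id (blockEmb A i) := rfl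

lemma isGreatest_eigval_blockMat {H : Matrix (Fin n) (Fin n) ℝ} (hU : U ∈ eigOrth A)
    (hH : H.IsHermitian) (hcard : 0 < (blockSet A i).card) :
    IsGreatest ((fun u => u ⬝ᵥ H *ᵥ u) '' unitEigenvectors A i)
      (eigval (blockMat A (Uᵀ * H * U) i) ⟨0, hcard⟩) := by
  have hherm : (blockMat A (Uᵀ * H * U) i).IsHermitian := by
    rw [blockMat_conj, ← conjTranspose_eq_transpose_of_trivial]
    exact isHermitian_conjTranspose_mul_mul _ hH
  convert isGreatest_eigval_zero hherm hcard using 1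
  rw [unitEigenvectors_eq_image hU (blockEmb_injective A i) (mem_range_blockEmb_iff A i),
    Set.image_image]
  refine Set.image_congr' fun c => ?_
  rw [blockMat_conj, ← mulVec_mulVec, ← mulVec_mulVec, dotProduct_mulVec c, vecMul_transpose]

end RayleighBlock

section Subdifferential

variable {n : ℕ}

/-- A density matrix on the eigenspace of `eigval A i`: positive semidefinite of unit trace and
vanishing on all other eigenspaces of `A`. These are the subgradients of `eigval · i` at `A`,
described without reference to a choice of eigenbasis. -/
structure IsEigenspaceDensity (A : Matrix (Fin n) (Fin n) ℝ) (i : Fin n)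
    (Y : Matrix (Fin n) (Fin n) ℝ) : Prop where
  posSemidef : Y.PosSemidef
  trace_eq_one : Y.trace = 1
  mulVec_eq_zero : ∀ {μ : ℝ} {v : Fin n → ℝ}, μ ≠ eigval A i → A *ᵥ v = μ • v → Y *ᵥ v = 0

lemma dotProduct_eq_zero_of_mulVec_eq_smul {m : Type*} [Fintype m] {M : Matrix m m ℝ}
    (hM : M.IsSymm) {u v : m → ℝ} {a b : ℝ} (hab : a ≠ b) (hu : M *ᵥ u = a • u)
    (hv : M *ᵥ v = b • v) : u ⬝ᵥ v = 0 := by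
  have hcomm : a * (u ⬝ᵥ v) = b * (u ⬝ᵥ v) := by
    rw [← smul_eq_mul, ← smul_eq_mul, ← smul_dotProduct, ← hu, ← dotProduct_smul, ← hv,
      dotProduct_mulVec, ← mulVec_transpose, hM]
  exact (mul_eq_mul_right_iff.1 hcomm).resolve_left hab

lemma traceForm_comm (A B : Sym n) : traceForm n A B = traceForm n B A :=
  trace_mul_comm A.val B.val

lemma dotProduct_mulVec_rankOne (u x : Fin n → ℝ) :
    u ⬝ᵥ (rankOne x).val *ᵥ u = (u ⬝ᵥ x) ^ 2 := by
  change u ⬝ᵥ vecMulVec x x *ᵥ u = _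
  rw [vecMulVec_mulVec, dotProduct_smul, dotProduct_comm x u]
  simp [sq]

/- Test matrices: `∓ x xᵀ` give semidefiniteness and vanishing, `± 1` give the trace. -/
lemma isEigenspaceDensity_of_forall_traceForm_le {X Y : Sym n} {i : Fin n}
    (h : ∀ H : Sym n, ∃ u ∈ unitEigenvectors X.val i, traceForm n Y H ≤ u ⬝ᵥ H.val *ᵥ u) :
    IsEigenspaceDensity X.val i Y.val := by
  have hrank : ∀ x, traceForm n Y (rankOne x) = x ⬝ᵥ Y.val *ᵥ x := fun x => by
    rw [traceForm_comm, traceForm_rankOne]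
  have hpsd : Y.val.PosSemidef := by
    refine .of_dotProduct_mulVec_nonneg Y.isHermitian fun x => ?_
    obtain ⟨u, -, hle⟩ := h (-rankOne x)
    have hneg : u ⬝ᵥ (-rankOne x).val *ᵥ u = -(u ⬝ᵥ x) ^ 2 := by
      rw [← dotProduct_mulVec_rankOne, ← dotProduct_neg, ← neg_mulVec]
      rfl
    rw [map_neg, hrank, hneg] at hle
    rw [star_trivial]
    linarith [sq_nonneg (u ⬝ᵥ x)]
  refine ⟨hpsd, ?_, fun {μ v} hμ hv => ?_⟩
  · have hscalar : ∀ c : ℝ, c * Y.val.trace ≤ c := fun c => by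
      obtain ⟨u, hu, hle⟩ := h ⟨c • 1, isSymm_one.smul c⟩
      have hleft : traceForm n Y ⟨c • 1, isSymm_one.smul c⟩ = c * Y.val.trace := by
        change (Y.val * (c • 1)).trace = _
        rw [mul_smul_comm, mul_one, trace_smul, smul_eq_mul]
      rwa [hleft, smul_mulVec, one_mulVec, dotProduct_smul, hu.1, smul_eq_mul, mul_one] at hle
    linarith [hscalar 1, hscalar (-1)]
  · obtain ⟨u, hu, hle⟩ := h (rankOne v)
    rw [hrank, dotProduct_mulVec_rankOne,
      dotProduct_eq_zero_of_mulVec_eq_smul X.2 hμ.symm hu.2 hv, zero_pow two_ne_zero] at hle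
    exact (hpsd.dotProduct_mulVec_zero_iff v).1 (hle.antisymm (hpsd.dotProduct_mulVec_nonneg v))

section BlockDiagonal

variable {ι : Type*} (p : ι → Prop) [DecidablePred p]

/-- The matrix that is `M` on the indices satisfying `p`, `N` on the remaining ones, and has no
entries between the two groups. -/
def blockDiag (M : Matrix {j // p j} {j // p j} ℝ) (N : Matrix {j // ¬p j} {j // ¬p j} ℝ) :
    Matrix ι ι ℝ :=
  (fromBlocks M 0 0 N).submatrix (Equiv.sumCompl p).symm (Equiv.sumCompl p).symm

variable {p}

lemma blockDiag_transpose (M : Matrix {j // p j} {j // p j} ℝ)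
    (N : Matrix {j // ¬p j} {j // ¬p j} ℝ) : (blockDiag p M N)ᵀ = blockDiag p Mᵀ Nᵀ := by
  rw [blockDiag, transpose_submatrix, fromBlocks_transpose, transpose_zero, transpose_zero,
    blockDiag]

lemma eq_blockDiag {C : Matrix ι ι ℝ} (hC : C.IsSymm) (hoff : ∀ j k, ¬p k → C j k = 0) :
    C = blockDiag p (C.toBlock p p) 0 := by
  ext j k
  by_cases hj : p j <;> by_cases hk : p k <;>
    simp [blockDiag, hj, hk, Equiv.sumCompl_symm_apply_of_pos, Equiv.sumCompl_symm_apply_of_neg,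
      toBlock_apply, hoff, ← hC.apply j k]

lemma blockDiag_diagonal [DecidableEq ι] (d : ι → ℝ) :
    blockDiag p (diagonal fun j => d j) (diagonal fun j => d j) = diagonal d := by
  rw [blockDiag, fromBlocks_diagonal, submatrix_diagonal_equiv]
  congr 1
  ext j
  by_cases hj : p j <;>
    simp [hj, Equiv.sumCompl_symm_apply_of_pos, Equiv.sumCompl_symm_apply_of_neg]

variable [Fintype ι]

lemma blockDiag_mul (M M' : Matrix {j // p j} {j // p j} ℝ)
    (N N' : Matrix {j // ¬p j} {j // ¬p j} ℝ) :
    blockDiag p M N * blockDiag p M' N' = blockDiag p (M * M') (N * N') := by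
  simp [blockDiag, submatrix_mul_equiv, fromBlocks_multiply]

variable [DecidableEq ι] {Q : Matrix {j // p j} {j // p j} ℝ}

lemma blockDiag_one_conj_diagonal (d : ι → ℝ) :
    blockDiag p Q 1 * diagonal d * (blockDiag p Q 1)ᵀ =
      blockDiag p (Q * diagonal (fun j : {j // p j} => d j) * Qᵀ)
        (diagonal fun j : {j // ¬p j} => d j) := by
  rw [← blockDiag_diagonal (p := p) d, blockDiag_transpose, blockDiag_mul, blockDiag_mul,
    transpose_one, one_mul, mul_one]

lemma blockDiag_one_conj_diagonal_of_forall_eq (hQ : Q * Qᵀ = 1) {d : ι → ℝ} {c : ℝ}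
    (hd : ∀ j, p j → d j = c) :
    blockDiag p Q 1 * diagonal d * (blockDiag p Q 1)ᵀ = diagonal d := by
  have hc : (diagonal fun j : {j // p j} => d j) = c • 1 := by
    rw [smul_one_eq_diagonal]
    exact congrArg diagonal (funext fun j => hd j j.2)
  rw [blockDiag_one_conj_diagonal, ← blockDiag_diagonal (p := p) d, hc, mul_smul_comm, mul_one,
    smul_mul_assoc, hQ]

end BlockDiagonal

lemma exists_orthogonal_eq_conj_diagonal_of_support {ι : Type*} [Fintype ι] [DecidableEq ι]
    {p : ι → Prop} {C : Matrix ι ι ℝ} (hC : C.IsSymm) (hoff : ∀ j k, ¬p k → C j k = 0) :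
    ∃ (R : Matrix ι ι ℝ) (z : ι → ℝ), R * Rᵀ = 1 ∧ (∀ j, ¬p j → z j = 0) ∧
      C = R * diagonal z * Rᵀ ∧
      ∀ (d : ι → ℝ) (c : ℝ), (∀ j, p j → d j = c) → R * diagonal d * Rᵀ = diagonal d := by
  classical
  have hblock : (C.toBlock p p).IsHermitian :=
    (conjTranspose_eq_transpose_of_trivial _).trans (hC.submatrix _)
  obtain ⟨Q, hQ, hspec⟩ := exists_orthogonal_eq_conj_diagonal hblock
  set z : ι → ℝ := fun j => if hj : p j then hblock.eigenvalues ⟨j, hj⟩ else 0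
  refine ⟨blockDiag p Q 1, z, ?_, fun j hj => dif_neg hj, ?_,
    fun d c hd => blockDiag_one_conj_diagonal_of_forall_eq hQ hd⟩
  · simpa using blockDiag_one_conj_diagonal_of_forall_eq (p := p) (d := 1) (c := 1) hQ
      fun _ _ => rfl
  · have hon : (fun j : {j // p j} => z j) = hblock.eigenvalues := funext fun j => dif_pos j.2
    have hzero : (fun j : {j // ¬p j} => z j) = fun _ => 0 := funext fun j => dif_neg j.2
    rw [blockDiag_one_conj_diagonal, hon, hzero, ← hspec, diagonal_zero]
    exact eq_blockDiag hC hoff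

variable {A Y : Matrix (Fin n) (Fin n) ℝ} {i : Fin n}

theorem IsEigenspaceDensity.exists_eq_conj_diagonal (hA : A.IsHermitian)
    (hY : IsEigenspaceDensity A i Y) :
    ∃ U ∈ eigOrth A, ∃ z : Fin n → ℝ, (∀ j, 0 ≤ z j) ∧
      (∀ j, eigval A j ≠ eigval A i → z j = 0) ∧ ∑ j, z j = 1 ∧ Y = U * diagonal z * Uᵀ := by
  obtain ⟨U, hU⟩ := eigOrth_nonempty hA
  have hoff : ∀ j k, eigval A k ≠ eigval A i → (Uᵀ * Y * U) j k = 0 := fun j k hk => by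
    have hYU : Y *ᵥ U.col k = 0 :=
      hY.mulVec_eq_zero hk (col_mem_unitEigenvectors hU rfl).2
    rw [Matrix.mul_assoc]
    exact (congrArg (Uᵀ j ⬝ᵥ ·) hYU).trans (dotProduct_zero _)
  have hsymm : (Uᵀ * Y * U).IsSymm := by
    have := isHermitian_conjTranspose_mul_mul U hY.posSemidef.isHermitian
    rwa [IsHermitian, conjTranspose_eq_transpose_of_trivial,
      conjTranspose_eq_transpose_of_trivial] at this
  obtain ⟨R, z, hR, hzero, hdiag, hfix⟩ := exists_orthogonal_eq_conj_diagonal_of_support hsymm hoff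
  have hconj : ∀ D, U * (R * D * Rᵀ) * Uᵀ = U * R * D * (U * R)ᵀ := fun D => by
    rw [transpose_mul]
    simp only [Matrix.mul_assoc]
  have hUR : U * R * (U * R)ᵀ = 1 := by
    simpa [hR, hU.1] using (hconj 1).symm
  have hrep : Y = U * R * diagonal z * (U * R)ᵀ := by
    rw [← hconj, ← hdiag]
    calc Y = U * Uᵀ * Y * (U * Uᵀ) := by rw [hU.1, one_mul, mul_one]
      _ = _ := by simp only [Matrix.mul_assoc]
  have hUR' : (U * R)ᵀ * (U * R) = 1 := mul_eq_one_comm.1 hUR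
  refine ⟨U * R, ⟨hUR, ?_⟩, z, posSemidef_diagonal_iff.1 ?_, hzero, ?_, hrep⟩
  · rw [← hconj, hfix _ _ fun _ hj => hj]
    exact hU.2
  · have hpsd := hY.posSemidef.conjTranspose_mul_mul_same (U * R)
    rwa [conjTranspose_eq_transpose_of_trivial, hrep, Matrix.mul_assoc, Matrix.mul_assoc, hUR',
      mul_one, ← Matrix.mul_assoc, hUR', one_mul] at hpsd
  · rw [← trace_diagonal, ← hY.trace_eq_one, hrep, trace_mul_comm, ← Matrix.mul_assoc,
      hUR', one_mul]

lemma eq_sum_smul_rankOne {U : Matrix (Fin n) (Fin n) ℝ} {z : Fin n → ℝ} {Y : Sym n}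
    (hY : Y.val = U * diagonal z * Uᵀ) : Y = ∑ j, z j • rankOne (U.col j) := by
  refine Subtype.ext (hY.trans ?_)
  rw [AddSubmonoidClass.coe_finsetSum]
  ext a b
  rw [mul_apply, Matrix.sum_apply]
  refine Finset.sum_congr rfl fun j _ => ?_
  change _ = z j * (U a j * U b j)
  rw [mul_diagonal, transpose_apply]
  ring

lemma mem_of_eq_conj_diagonal {S : Set (Sym n)} (hS : Convex ℝ S)
    (hrank : ∀ u ∈ unitEigenvectors A i, rankOne u ∈ S) {U : Matrix (Fin n) (Fin n) ℝ}
    (hU : U ∈ eigOrth A) {z : Fin n → ℝ} (hz : ∀ j, 0 ≤ z j)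
    (hzero : ∀ j, eigval A j ≠ eigval A i → z j = 0) (hsum : ∑ j, z j = 1) {Y : Sym n}
    (hY : Y.val = U * diagonal z * Uᵀ) : Y ∈ S := by
  have hoff : ∀ j ∉ blockSet A i, z j = 0 := fun j hj =>
    hzero j fun heq => hj (Finset.mem_filter.2 ⟨Finset.mem_univ j, heq⟩)
  rw [eq_sum_smul_rankOne hY, ← Finset.sum_subset (Finset.subset_univ (blockSet A i))
    fun j _ hj => by rw [hoff j hj, zero_smul]]
  refine hS.sum_mem (fun j _ => hz j) ?_ fun j hj =>
    hrank _ (col_mem_unitEigenvectors hU (Finset.mem_filter.1 hj).2)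
  rw [Finset.sum_subset (Finset.subset_univ _) fun j _ hj => hoff j hj, hsum]

end Subdifferential

section Subgradients

variable {n : ℕ} {X Y : Sym n} {i : Fin n}

lemma exists_nhds_weaklyConvexOn_eigval (hlead : ∀ j < i, eigval X.val i < eigval X.val j) :
    ∃ V ∈ 𝓝 X, ∃ r : ℝ, 0 ≤ r ∧
      WeaklyConvexOn (traceForm n) r V fun A : Sym n => eigval A.val i := by
  obtain ⟨V, hV, r, hr, hconvex, hminorant⟩ := exists_nhds_hasQuadMinorantOn_rankOne hlead
  refine ⟨V, hV, r, hr, weaklyConvexOn_of_forall_exists_quadMinorant hconvex fun A hA => ?_⟩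
  obtain ⟨u, hu⟩ := unitEigenvectors_nonempty A.isHermitian i
  exact ⟨rankOne u, hminorant A hA u hu⟩

theorem subdiffRegularAt_eigval (hlead : ∀ j < i, eigval X.val i < eigval X.val j) :
    SubdiffRegularAt ipM (fun A : Sym n => (eigval A.val i : EReal)) X := by
  obtain ⟨V, hV, r, hr, hweak⟩ := exists_nhds_weaklyConvexOn_eigval hlead
  exact hweak.subdiffRegularAt hr traceForm_self_nonneg continuous_traceForm hV

theorem LimSubgrad.isEigenspaceDensity (hlead : ∀ j < i, eigval X.val i < eigval X.val j)
    (hY : LimSubgrad ipM (fun A : Sym n => (eigval A.val i : EReal)) X Y) :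
    IsEigenspaceDensity X.val i Y.val := by
  obtain ⟨V, hV, r, hr, hweak⟩ := exists_nhds_weaklyConvexOn_eigval hlead
  have hminorant : HasQuadMinorantOn (traceForm n) r V (fun A => eigval A.val i) X Y :=
    hweak.hasQuadMinorantOn_of_limSubgrad hr traceForm_self_pos continuous_traceForm hV hY
  obtain ⟨U, hU⟩ := eigOrth_nonempty X.isHermitian
  refine isEigenspaceDensity_of_forall_traceForm_le fun H => ?_
  have hgreatest := isGreatest_eigval_blockMat hU H.isHermitian
    (Finset.card_pos.2 ⟨i, mem_blockSet_self X.val i⟩)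
  obtain ⟨u, hu, hud⟩ := hgreatest.1
  exact ⟨u, hu, (hminorant.le_of_tendsto hV
    (tendsto_dirQuotient_eigval hlead hgreatest)).trans_eq hud.symm⟩

theorem limSubgrad_eigval_of_eq_conj_diagonal
    (hlead : ∀ j < i, eigval X.val i < eigval X.val j) {U : Matrix (Fin n) (Fin n) ℝ}
    (hU : U ∈ eigOrth X.val) {z : Fin n → ℝ} (hz : ∀ j, 0 ≤ z j)
    (hzero : ∀ j, eigval X.val j ≠ eigval X.val i → z j = 0) (hsum : ∑ j, z j = 1)
    (hY : Y.val = U * diagonal z * Uᵀ) :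
    LimSubgrad ipM (fun A : Sym n => (eigval A.val i : EReal)) X Y := by
  obtain ⟨V, hV, r, -, -, hminorant⟩ := exists_nhds_hasQuadMinorantOn_rankOne hlead
  have hYminorant : HasQuadMinorantOn (traceForm n) r V (fun A => eigval A.val i) X Y :=
    mem_of_eq_conj_diagonal
      (S := {v | HasQuadMinorantOn (traceForm n) r V (fun A => eigval A.val i) X v})
      (convex_setOf_hasQuadMinorantOn X)
      (hminorant X (mem_of_mem_nhds hV)) hU hz hzero hsum hY
  exact (hYminorant.regSubgrad traceForm_self_pos continuous_traceForm hV).limSubgrad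

end Subgradients

/-- Corollary 5.2: first-order properties of a leading eigenvalue function. -/
theorem leading_eigenvalue_first_order {n : ℕ} (X : Sym n) (i : Fin n)
    (hlead : ∀ j : Fin n, j < i → eigval X.val i < eigval X.val j) :
    -- (a) subderivative formula and one-sided directional derivative
    (∀ U ∈ eigOrth X.val, ∀ H : Sym n,
      subderiv (fun A : Sym n => ((eigval A.val i : ℝ) : EReal)) X H =
        ((eigval (blockMat X.val (Uᵀ * H.val * U) i)
            ⟨0, Finset.card_pos.mpr ⟨i, mem_blockSet_self X.val i⟩⟩ : ℝ) : EReal) ∧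
      Tendsto (fun t : ℝ => t⁻¹ * (eigval (X.val + t • H.val) i - eigval X.val i))
        (nhdsWithin (0 : ℝ) (Set.Ioi 0))
        (nhds (eigval (blockMat X.val (Uᵀ * H.val * U) i)
          ⟨0, Finset.card_pos.mpr ⟨i, mem_blockSet_self X.val i⟩⟩))) ∧
    -- (b) subdifferential regularity
    SubdiffRegularAt ipM (fun A : Sym n => ((eigval A.val i : ℝ) : EReal)) X ∧
    -- (c) subdifferential formula
    (∀ Y : Sym n,
      LimSubgrad ipM (fun A : Sym n => ((eigval A.val i : ℝ) : EReal)) X Y ↔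
        ∃ U ∈ eigOrth X.val, ∃ z : Fin n → ℝ, (∀ j, 0 ≤ z j) ∧
          (∀ j, eigval X.val j ≠ eigval X.val i → z j = 0) ∧ (∑ j, z j) = 1 ∧
          Y.val = U * Matrix.diagonal z * Uᵀ) := by
  refine ⟨fun U hU H => ?_, subdiffRegularAt_eigval hlead, fun Y => ⟨fun hY => ?_, ?_⟩⟩
  · have hgreatest := isGreatest_eigval_blockMat hU H.isHermitian
      (Finset.card_pos.mpr ⟨i, mem_blockSet_self X.val i⟩)
    exact ⟨subderiv_coe_of_tendsto (tendsto_diffQuotient_eigval hlead hgreatest),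
      tendsto_dirQuotient_eigval hlead hgreatest⟩
  · exact (hY.isEigenspaceDensity hlead).exists_eq_conj_diagonal X.isHermitian
  · rintro ⟨U, hU, z, hz, hzero, hsum, hYU⟩
    exact limSubgrad_eigval_of_eq_conj_diagonal hlead hU hz hzero hsum hYU

end SpecPaper
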